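/- arXiv:2509.01722 — 12 statements merged into one kernel-verified Lean document; each statement's English description precedes it below -/
import Mathlib

section
/- Let R be a Dedekind domain with fraction field K, let 𝔞 be a nonzero fractional ideal of R, and let a ∈ 𝔞⁻¹ and b ∈ 𝔞⁻² satisfy a² − 4b ≠ 0. Then the stabilizer of the form f(x,y) = x² + axy + by² in the group G_𝔞 = {(u,λ) : u ∈ 𝔞⁻¹, λ ∈ R×}, i.e. the set of pairs (u,λ) ∈ 𝔞⁻¹ × R× with aλ + 2u = a and bλ² + uaλ + u² = b, is exactly {(0,1), (a,−1)}; in particular it has exactly 2 elements. -/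
/-!
Eliminating `u` from `aλ + 2u = a` and `bλ² + uaλ + u² = b` gives
`(a² - 4b)(1 - λ²) = 0`, so nondegeneracy forces `λ = 1` or `λ = -1`. The second equation then
reads `u (u ± a) = 0`, and the first one selects a root. The argument avoids dividing by `2`: in
characteristic `2` both signs of `λ` agree, both roots `u = 0` and `u = a` occur, and they are
distinct because the discriminant is then `a²`.
-/

open FractionalIdeal

/-- For a nondegenerate monic binary quadratic form `x² + axy + by²` over a Dedekind
domain `R` with `a ∈ 𝔞⁻¹`, `b ∈ 𝔞⁻²`, the stabilizer of the form in the group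
`G_𝔞 = {(u, λ) | u ∈ 𝔞⁻¹, λ ∈ Rˣ}` is exactly `{(0,1), (a,-1)}`, a set of 2 elements. -/
theorem stmt_2 {R K : Type*} [CommRing R] [IsDedekindDomain R] [Field K] [Algebra R K]
    [IsFractionRing R K] (𝔞 : FractionalIdeal (nonZeroDivisors R) K) (h𝔞 : 𝔞 ≠ 0)
    (a b : K) (ha : a ∈ 𝔞⁻¹) (hb : b ∈ 𝔞⁻¹ * 𝔞⁻¹) (hdisc : a ^ 2 - 4 * b ≠ 0) :
    {p : K × K | p.1 ∈ 𝔞⁻¹ ∧ (∃ v : Rˣ, algebraMap R K v = p.2) ∧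
        a * p.2 + 2 * p.1 = a ∧ b * p.2 ^ 2 + p.1 * a * p.2 + p.1 ^ 2 = b}
      = {(0, 1), (a, -1)} ∧
    {p : K × K | p.1 ∈ 𝔞⁻¹ ∧ (∃ v : Rˣ, algebraMap R K v = p.2) ∧
        a * p.2 + 2 * p.1 = a ∧ b * p.2 ^ 2 + p.1 * a * p.2 + p.1 ^ 2 = b}.ncard = 2 := by
  have hset : {p : K × K | p.1 ∈ 𝔞⁻¹ ∧ (∃ v : Rˣ, algebraMap R K v = p.2) ∧
        a * p.2 + 2 * p.1 = a ∧ b * p.2 ^ 2 + p.1 * a * p.2 + p.1 ^ 2 = b}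
      = {(0, 1), (a, -1)} := by
    ext ⟨u, l⟩
    simp only [Set.mem_ofPred_eq, Set.mem_insert_iff, Set.mem_singleton_iff, Prod.mk.injEq]
    constructor
    · rintro ⟨-, -, h1, h2⟩
      have hl : (a ^ 2 - 4 * b) * ((1 - l) * (1 + l)) = 0 := by
        linear_combination (-(2 * u + a * l + a)) * h1 + 4 * h2
      rcases mul_eq_zero.1 ((mul_eq_zero.1 hl).resolve_left hdisc) with h | h
      · obtain rfl : l = 1 := by linear_combination -h
        have h2u : (2 : K) * u = 0 := by linear_combination h1
        rcases mul_eq_zero.1 h2u with h | h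
        · have hu : u * (u - a) = 0 := by linear_combination h2 - u * a * h
          rcases mul_eq_zero.1 hu with hu | hu
          · exact Or.inl ⟨hu, rfl⟩
          -- Here `2 = 0`, so `λ = 1` is also `-1`.
          · exact Or.inr ⟨by linear_combination hu, by linear_combination h⟩
        · exact Or.inl ⟨h, rfl⟩
      · obtain rfl : l = -1 := by linear_combination h
        have h2u : (2 : K) * (u - a) = 0 := by linear_combination h1
        rcases mul_eq_zero.1 h2u with h | h
        · have hu : u * (u - a) = 0 := by linear_combination h2
          rcases mul_eq_zero.1 hu with hu | hu
          -- Here `2 = 0`, so `λ = -1` is also `1`.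
          · exact Or.inl ⟨hu, by linear_combination -h⟩
          · exact Or.inr ⟨by linear_combination hu, rfl⟩
        · exact Or.inr ⟨by linear_combination h, rfl⟩
    · rintro (⟨rfl, rfl⟩ | ⟨rfl, rfl⟩)
      · exact ⟨zero_mem _, ⟨1, by simp⟩, by ring, by ring⟩
      · exact ⟨ha, ⟨-1, by simp⟩, by ring, by ring⟩
  refine ⟨hset, ?_⟩
  rw [hset]
  apply Set.ncard_pair
  intro h
  obtain ⟨h0, h1⟩ := Prod.mk.inj h
  -- Equality of the two pairs would give `a = 0` and `2 = 0`, hence zero discriminant.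
  exact hdisc (by linear_combination (-a) * h0 - 2 * b * h1)
end

section
/- Let R be a Dedekind domain with fraction field K and let 𝔞 be a nonzero fractional ideal of R. For a ∈ 𝔞⁻¹ and b ∈ 𝔞⁻², let S_{a,b} denote the R-subalgebra of K[X]/(X² + aX + b) whose underlying R-module is R·1 + 𝔞·ξ, where ξ is the image of X (this R-submodule is closed under multiplication, since a ∈ 𝔞⁻¹ and b ∈ 𝔞⁻²). Then for a, a' ∈ 𝔞⁻¹ and b, b' ∈ 𝔞⁻², the R-algebras S_{a,b} and S_{a',b'} are isomorphic if and only if there exist u ∈ 𝔞⁻¹ and λ ∈ R× with a' = aλ + 2u and b' = bλ² + uaλ + u². -/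
open Polynomial

/-!
An isomorphism `S_{a,b} ≃ S_{a',b'}` is `K`-linear in disguise: since `𝔞 ⊆ K` has rank one, there are
`c, m ∈ K` with `x ξ ↦ x (c + m ξ')` for all `x ∈ 𝔞` (`exists_linear_form`). Membership in
`S_{a',b'}` forces `c 𝔞 ⊆ R` and `m 𝔞 ⊆ 𝔞`, that is `c ∈ 𝔞⁻¹` and `m ∈ R`, because `𝔞` is
invertible. The inverse isomorphism yields an inverse of `m` in `R`. Comparing coefficients in
`(c + m ξ')² + a (c + m ξ') + b = 0` gives the stated relations with `λ = m⁻¹` and `u = c m⁻¹`.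

Conversely, for given `u` and `λ` the assignments `ξ ↦ λ⁻¹ (u + ξ')` and `ξ' ↦ -u + λ ξ` define
mutually inverse isomorphisms of the ambient `K`-algebras, and each maps the one order into the other.
-/

section Abstract

variable {R K A A' : Type*} [CommRing R] [Field K] [Algebra R K]
  [CommRing A] [Algebra R A] [Algebra K A] [IsScalarTower R K A]
  [CommRing A'] [Algebra R A'] [Algebra K A'] [IsScalarTower R K A']

/-- An `R`-algebra homomorphism between the orders `R + 𝔞 ξ` and `R + 𝔞 ξ'` is given on `𝔞 ξ` by
`x ξ ↦ x (c + m ξ')` for fixed `c, m ∈ K`, as any two elements of `𝔞` are proportional over `R`. -/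
lemma exists_linear_form [IsDomain R] [IsFractionRing R K]
    (𝔞 : FractionalIdeal (nonZeroDivisors R) K) (h𝔞 : 𝔞 ≠ 0)
    (ξ : A) (ξ' : A')
    (hind' : ∀ p q : K, algebraMap K A' p + algebraMap K A' q * ξ' = 0 → p = 0 ∧ q = 0)
    (S : Subalgebra R A) (S' : Subalgebra R A')
    (hS : ∀ x ∈ 𝔞, algebraMap K A x * ξ ∈ S)
    (hS' : ∀ z ∈ S', ∃ r : R, ∃ x ∈ 𝔞, z = algebraMap R A' r + algebraMap K A' x * ξ')
    (φ : S →ₐ[R] S') :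
    ∃ c m : K, ∀ x (hx : x ∈ 𝔞), (∃ r : R, algebraMap R K r = x * c) ∧ x * m ∈ 𝔞 ∧
      (φ ⟨algebraMap K A x * ξ, hS x hx⟩ : A') =
        algebraMap K A' (x * c) + algebraMap K A' (x * m) * ξ' := by
  have key : ∀ x (hx : x ∈ 𝔞), ∃ r : R, ∃ y ∈ 𝔞, (φ ⟨algebraMap K A x * ξ, hS x hx⟩ : A') =
        algebraMap K A' (algebraMap R K r) + algebraMap K A' y * ξ' := by
    intro x hx
    obtain ⟨r, y, hy, h⟩ := hS' _ (φ ⟨algebraMap K A x * ξ, hS x hx⟩).2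
    exact ⟨r, y, hy, by rw [h, IsScalarTower.algebraMap_apply R K A']⟩
  obtain ⟨x₀, hx₀, hx₀0⟩ : ∃ x ∈ 𝔞, x ≠ 0 := by
    by_contra! h
    exact h𝔞 (FractionalIdeal.eq_zero_iff.mpr h)
  obtain ⟨r₀, y₀, hy₀, h₀⟩ := key x₀ hx₀
  refine ⟨algebraMap R K r₀ / x₀, y₀ / x₀, fun x hx => ?_⟩
  obtain ⟨r, y, hy, h⟩ := key x hx
  -- proportionality: `p x = q x₀` with `p, q ∈ R` and `p ≠ 0`
  obtain ⟨q, p, hp, hqp⟩ := IsFractionRing.div_surjective (A := R) (x / x₀)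
  have hp0 : algebraMap R K p ≠ 0 := by
    simpa using nonZeroDivisors.ne_zero hp
  have hpq : algebraMap R K p * x = algebraMap R K q * x₀ := by
    field_simp at hqp
    linear_combination -hqp
  have hφ : p • φ ⟨algebraMap K A x * ξ, hS x hx⟩ = q • φ ⟨algebraMap K A x₀ * ξ, hS x₀ hx₀⟩ := by
    rw [← map_smul, ← map_smul]
    congr 1
    ext
    change p • (algebraMap K A x * ξ) = q • (algebraMap K A x₀ * ξ)
    simp only [Algebra.smul_def, IsScalarTower.algebraMap_apply R K A]
    rw [← mul_assoc, ← mul_assoc, ← map_mul, ← map_mul, hpq]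
  have hφ' : p • (φ ⟨algebraMap K A x * ξ, hS x hx⟩ : A') =
      q • (φ ⟨algebraMap K A x₀ * ξ, hS x₀ hx₀⟩ : A') := congrArg Subtype.val hφ
  simp only [Algebra.smul_def, IsScalarTower.algebraMap_apply R K A', h, h₀] at hφ'
  obtain ⟨e1, e2⟩ := hind' (algebraMap R K p * algebraMap R K r - algebraMap R K q * algebraMap R K r₀)
    (algebraMap R K p * y - algebraMap R K q * y₀) (by
      simp only [map_sub, map_mul]
      linear_combination hφ')
  have h1 : x * (algebraMap R K r₀ / x₀) = algebraMap R K r := by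
    apply mul_left_cancel₀ hp0
    rw [← mul_assoc, hpq, mul_assoc, mul_div_cancel₀ _ hx₀0]
    linear_combination -e1
  have h2 : x * (y₀ / x₀) = y := by
    apply mul_left_cancel₀ hp0
    rw [← mul_assoc, hpq, mul_assoc, mul_div_cancel₀ _ hx₀0]
    linear_combination -e2
  rw [h1, h2]
  exact ⟨⟨r, rfl⟩, hy, h⟩

lemma mem_inv_of_forall [IsDedekindDomain R] [IsFractionRing R K]
    {𝔞 : FractionalIdeal (nonZeroDivisors R) K} (h𝔞 : 𝔞 ≠ 0) {c : K}
    (h : ∀ x ∈ 𝔞, ∃ r : R, algebraMap R K r = x * c) : c ∈ 𝔞⁻¹ := by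
  rw [FractionalIdeal.mem_inv_iff h𝔞]
  intro x hx
  obtain ⟨r, hr⟩ := h x hx
  rw [FractionalIdeal.mem_one_iff]
  exact ⟨r, by rw [hr, mul_comm]⟩

/-- The multiplier ring of a nonzero fractional ideal of a Dedekind domain is the domain itself. -/
lemma exists_algebraMap_eq_of_forall_mul_mem [IsDedekindDomain R] [IsFractionRing R K]
    {𝔞 : FractionalIdeal (nonZeroDivisors R) K} (h𝔞 : 𝔞 ≠ 0) {m : K}
    (h : ∀ x ∈ 𝔞, x * m ∈ 𝔞) : ∃ r : R, algebraMap R K r = m := by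
  have hle : FractionalIdeal.spanSingleton (nonZeroDivisors R) m * 𝔞 ≤ 𝔞 := by
    rw [FractionalIdeal.spanSingleton_mul_le_iff]
    intro x hx
    rw [mul_comm]
    exact h x hx
  have h1 : FractionalIdeal.spanSingleton (nonZeroDivisors R) m ≤ 1 := by
    have := mul_le_mul_left hle 𝔞⁻¹
    rwa [mul_assoc, mul_inv_cancel₀ h𝔞, mul_one] at this
  rw [FractionalIdeal.spanSingleton_le_iff_mem, FractionalIdeal.mem_one_iff] at h1
  exact h1

/-- The forward implication, for any two `K`-algebras containing roots `ξ`, `ξ'` of the respective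
quadratic polynomials such that `1, ξ` and `1, ξ'` are linearly independent over `K`. -/
lemma exists_params_of_algEquiv [IsDedekindDomain R] [IsFractionRing R K]
    (𝔞 : FractionalIdeal (nonZeroDivisors R) K) (h𝔞 : 𝔞 ≠ 0)
    (a b a' b' : K) (ξ : A) (ξ' : A')
    (hξ : ξ ^ 2 + algebraMap K A a * ξ + algebraMap K A b = 0)
    (hξ' : ξ' ^ 2 + algebraMap K A' a' * ξ' + algebraMap K A' b' = 0)
    (ha : a ∈ 𝔞⁻¹) (hb : b ∈ 𝔞⁻¹ * 𝔞⁻¹)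
    (hind : ∀ p q : K, algebraMap K A p + algebraMap K A q * ξ = 0 → p = 0 ∧ q = 0)
    (hind' : ∀ p q : K, algebraMap K A' p + algebraMap K A' q * ξ' = 0 → p = 0 ∧ q = 0)
    (S : Subalgebra R A) (S' : Subalgebra R A')
    (hS : ∀ z, z ∈ S ↔ ∃ r : R, ∃ x ∈ 𝔞, z = algebraMap R A r + algebraMap K A x * ξ)
    (hS' : ∀ z, z ∈ S' ↔ ∃ r : R, ∃ x ∈ 𝔞, z = algebraMap R A' r + algebraMap K A' x * ξ')
    (φ : S ≃ₐ[R] S') :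
    ∃ u ∈ (𝔞⁻¹ : FractionalIdeal (nonZeroDivisors R) K), ∃ lam : Rˣ,
        a' = a * algebraMap R K lam + 2 * u ∧
        b' = b * (algebraMap R K lam) ^ 2 + u * a * algebraMap R K lam + u ^ 2 := by
  have hmem : ∀ x ∈ 𝔞, algebraMap K A x * ξ ∈ S := fun x hx => (hS _).2 ⟨0, x, hx, by simp⟩
  have hmem' : ∀ x ∈ 𝔞, algebraMap K A' x * ξ' ∈ S' := fun x hx => (hS' _).2 ⟨0, x, hx, by simp⟩
  obtain ⟨c, m, hcm⟩ := exists_linear_form 𝔞 h𝔞 ξ ξ' hind' S S' hmem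
    (fun z hz => (hS' z).1 hz) φ.toAlgHom
  obtain ⟨c', m', hcm'⟩ := exists_linear_form 𝔞 h𝔞 ξ' ξ hind S' S hmem'
    (fun z hz => (hS z).1 hz) φ.symm.toAlgHom
  have hc : c ∈ 𝔞⁻¹ := mem_inv_of_forall h𝔞 fun x hx => (hcm x hx).1
  obtain ⟨μ, hμ⟩ := exists_algebraMap_eq_of_forall_mul_mem h𝔞 fun x hx => (hcm x hx).2.1
  obtain ⟨l, hl⟩ := exists_algebraMap_eq_of_forall_mul_mem h𝔞 fun x hx => (hcm' x hx).2.1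
  obtain ⟨x, hx, hx0⟩ : ∃ x ∈ 𝔞, x ≠ 0 := by
    by_contra! h
    exact h𝔞 (FractionalIdeal.eq_zero_iff.mpr h)
  obtain ⟨⟨r, hr⟩, hxm, hφ⟩ := hcm x hx
  have hmm : m * m' = 1 := by
    obtain ⟨-, -, hψ⟩ := hcm' _ hxm
    have e : φ ⟨algebraMap K A x * ξ, hmem x hx⟩ =
        algebraMap R S' r + ⟨algebraMap K A' (x * m) * ξ', hmem' _ hxm⟩ := by
      ext
      rw [← hr, ← IsScalarTower.algebraMap_apply] at hφ
      exact hφ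
    have e2 := congrArg Subtype.val (congrArg φ.symm e)
    rw [φ.symm_apply_apply, map_add, AlgEquiv.commutes] at e2
    have e3 : algebraMap K A x * ξ = algebraMap K A (algebraMap R K r) +
      (algebraMap K A (x * m * c') + algebraMap K A (x * m * m') * ξ) := by
      rw [← IsScalarTower.algebraMap_apply]
      exact e2.trans (congrArg (_ + ·) hψ)
    obtain ⟨-, e4⟩ := hind (algebraMap R K r + x * m * c') (x * m * m' - x) (by
      simp only [map_add, map_sub]
      linear_combination -e3)
    apply mul_left_cancel₀ hx0
    linear_combination e4
  have hm0 : m ≠ 0 := left_ne_zero_of_mul_eq_one hmm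
  have hμl : l * μ = 1 := by
    apply IsFractionRing.injective R K
    rw [map_mul, map_one, hμ, hl, mul_comm, hmm]
  -- the quadratic equation of `x ξ` has coefficients `x a` and `x² b` in `R`, so `φ` preserves it
  obtain ⟨s, hs⟩ : ∃ s : R, algebraMap R K s = x * a := by
    have := (FractionalIdeal.mem_inv_iff h𝔞).1 ha x hx
    obtain ⟨s, hs⟩ := (FractionalIdeal.mem_one_iff _).1 this
    exact ⟨s, by rw [hs, mul_comm]⟩
  obtain ⟨t, ht⟩ : ∃ t : R, algebraMap R K t = x * x * b := by
    have := FractionalIdeal.mul_mem_mul (FractionalIdeal.mul_mem_mul hx hx) hb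
    rw [mul_mul_mul_comm, mul_inv_cancel₀ h𝔞, mul_one] at this
    exact (FractionalIdeal.mem_one_iff _).1 this
  have hquad : (⟨algebraMap K A x * ξ, hmem x hx⟩ : S) ^ 2 +
      algebraMap R S s * ⟨algebraMap K A x * ξ, hmem x hx⟩ + algebraMap R S t = 0 := by
    ext
    change (algebraMap K A x * ξ) ^ 2 + algebraMap R A s * (algebraMap K A x * ξ) +
      algebraMap R A t = 0
    rw [IsScalarTower.algebraMap_apply R K A, IsScalarTower.algebraMap_apply R K A, hs, ht]
    simp only [map_mul]
    linear_combination (algebraMap K A x) ^ 2 * hξ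
  have hq2 := congrArg φ hquad
  rw [map_add, map_add, map_mul, map_pow, AlgEquiv.commutes, AlgEquiv.commutes, map_zero] at hq2
  have hq3 : (φ ⟨algebraMap K A x * ξ, hmem x hx⟩ : A') ^ 2 +
      algebraMap R A' s * (φ ⟨algebraMap K A x * ξ, hmem x hx⟩ : A') + algebraMap R A' t = 0 :=
    congrArg Subtype.val hq2
  have hφ2 : (φ ⟨algebraMap K A x * ξ, hmem x hx⟩ : A') =
        algebraMap K A' (x * c) + algebraMap K A' (x * m) * ξ' := hφ
  rw [IsScalarTower.algebraMap_apply R K A', IsScalarTower.algebraMap_apply R K A', hs, ht,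
    hφ2] at hq3
  obtain ⟨e1, e2⟩ := hind' (x ^ 2 * (c ^ 2 + a * c + b - m ^ 2 * b'))
    (x ^ 2 * (2 * c * m + a * m - m ^ 2 * a')) (by
      simp only [map_mul, map_add, map_sub, map_pow, map_ofNat] at hq3 ⊢
      linear_combination hq3 - (algebraMap K A' x) ^ 2 * (algebraMap K A' m) ^ 2 * hξ')
  have e1' := (mul_eq_zero.1 e1).resolve_left (pow_ne_zero 2 hx0)
  have e2' := (mul_eq_zero.1 e2).resolve_left (pow_ne_zero 2 hx0)
  refine ⟨m' * c, ?_, ⟨l, μ, hμl, by rw [mul_comm, hμl]⟩, ?_, ?_⟩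
  · rw [← hl, ← Algebra.smul_def]
    exact Submodule.smul_mem _ _ hc
  · simp only [hl]
    apply mul_left_cancel₀ (pow_ne_zero 2 hm0)
    linear_combination -e2' - (2 * c * m + a * m) * hmm
  · simp only [hl]
    apply mul_left_cancel₀ (pow_ne_zero 2 hm0)
    linear_combination -e1' - (c ^ 2 + a * c + b) * (m * m' + 1) * hmm

/-- If `f` sends `ξ` to `c + m ξ'` with `c ∈ 𝔞⁻¹` and `m ∈ R`, then it maps `R + 𝔞 ξ` into
`R + 𝔞 ξ'`. -/
lemma map_mem_of_apply_eq [IsDedekindDomain R] [IsFractionRing R K]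
    (𝔞 : FractionalIdeal (nonZeroDivisors R) K) (h𝔞 : 𝔞 ≠ 0) (ξ : A) (ξ' : A')
    (f : A →ₐ[K] A') (c : K) (m : R) (hc : c ∈ 𝔞⁻¹)
    (hf : f ξ = algebraMap K A' c + algebraMap R A' m * ξ') (z : A)
    (hz : ∃ r : R, ∃ x ∈ 𝔞, z = algebraMap R A r + algebraMap K A x * ξ) :
    ∃ r : R, ∃ x ∈ 𝔞, f z = algebraMap R A' r + algebraMap K A' x * ξ' := by
  obtain ⟨r, x, hx, rfl⟩ := hz
  obtain ⟨s, hs⟩ := (FractionalIdeal.mem_one_iff _).1 ((FractionalIdeal.mem_inv_iff h𝔞).1 hc x hx)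
  refine ⟨r + s, m • x, Submodule.smul_mem _ _ hx, ?_⟩
  rw [map_add, map_mul, hf, IsScalarTower.algebraMap_apply R K A, AlgHom.commutes,
    AlgHom.commutes, map_add]
  simp only [IsScalarTower.algebraMap_apply R K A', Algebra.smul_def, hs, map_mul]
  ring

/-- The substitution `ξ ↦ -u + l ξ` turns a root of `X² + aX + b` into one of `X² + a'X + b'`. -/
lemma transformed_root {a b a' b' u l : K} {ξ : A}
    (hξ : ξ ^ 2 + algebraMap K A a * ξ + algebraMap K A b = 0)
    (h1 : a' = a * l + 2 * u) (h2 : b' = b * l ^ 2 + u * a * l + u ^ 2) :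
    (algebraMap K A (-u) + algebraMap K A l * ξ) ^ 2 +
      algebraMap K A a' * (algebraMap K A (-u) + algebraMap K A l * ξ) + algebraMap K A b' = 0 := by
  rw [h1, h2]
  simp only [map_mul, map_add, map_neg, map_pow, map_ofNat]
  linear_combination (algebraMap K A l) ^ 2 * hξ

/-- Mutually inverse isomorphisms of the ambient algebras that map the subalgebras into each other
restrict to an isomorphism of the subalgebras. -/
lemma nonempty_algEquiv_of_algHom (S : Subalgebra R A) (S' : Subalgebra R A')
    (f : A →ₐ[K] A') (g : A' →ₐ[K] A) (hf : ∀ z ∈ S, f z ∈ S') (hg : ∀ z ∈ S', g z ∈ S)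
    (hgf : g.comp f = AlgHom.id K A) (hfg : f.comp g = AlgHom.id K A') :
    Nonempty (S ≃ₐ[R] S') := by
  refine ⟨AlgEquiv.ofAlgHom
    (((f.restrictScalars R).comp S.val).codRestrict S' fun z => hf _ z.2)
    (((g.restrictScalars R).comp S'.val).codRestrict S fun z => hg _ z.2) ?_ ?_⟩
  · ext z
    exact DFunLike.congr_fun hfg (z : A')
  · ext z
    exact DFunLike.congr_fun hgf (z : A)

end Abstract

section Quotient

variable {K : Type*} [Field K] (a b : K)

lemma root_eq : (Ideal.Quotient.mk (Ideal.span {X ^ 2 + C a * X + C b}) X) ^ 2 +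
    algebraMap K (K[X] ⧸ Ideal.span {X ^ 2 + C a * X + C b}) a *
      Ideal.Quotient.mk (Ideal.span {X ^ 2 + C a * X + C b}) X +
    algebraMap K (K[X] ⧸ Ideal.span {X ^ 2 + C a * X + C b}) b = 0 := by
  change Ideal.Quotient.mk (Ideal.span {X ^ 2 + C a * X + C b}) (X ^ 2 + C a * X + C b) = 0
  exact Ideal.Quotient.eq_zero_iff_mem.2 (Ideal.mem_span_singleton_self _)

lemma linearIndependent_one_root (p q : K)
    (h : algebraMap K (K[X] ⧸ Ideal.span {X ^ 2 + C a * X + C b}) p +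
      algebraMap K (K[X] ⧸ Ideal.span {X ^ 2 + C a * X + C b}) q *
        Ideal.Quotient.mk (Ideal.span {X ^ 2 + C a * X + C b}) X = 0) : p = 0 ∧ q = 0 := by
  change Ideal.Quotient.mk (Ideal.span {X ^ 2 + C a * X + C b}) (C p + C q * X) = 0 at h
  rw [Ideal.Quotient.eq_zero_iff_mem, Ideal.mem_span_singleton] at h
  have h0 : C p + C q * X = 0 := by
    apply eq_zero_of_dvd_of_degree_lt h
    have h2 : (X ^ 2 + C a * X + C b).degree = 2 := by compute_degree!
    rw [h2, add_comm]
    exact degree_linear_le.trans_lt (by norm_num)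
  constructor
  · simpa using congrArg (coeff · 0) h0
  · simpa using congrArg (coeff · 1) h0

lemma exists_algHom_of_root {A' : Type*} [CommRing A'] [Algebra K A'] (z : A')
    (hz : z ^ 2 + algebraMap K A' a * z + algebraMap K A' b = 0) :
    ∃ f : (K[X] ⧸ Ideal.span {X ^ 2 + C a * X + C b}) →ₐ[K] A',
      f (Ideal.Quotient.mk (Ideal.span {X ^ 2 + C a * X + C b}) X) = z := by
  have hker : ∀ p ∈ Ideal.span {X ^ 2 + C a * X + C b}, aeval z p = 0 := by
    intro p hp
    obtain ⟨q, rfl⟩ := Ideal.mem_span_singleton.1 hp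
    simp [hz]
  refine ⟨Ideal.Quotient.liftₐ _ (aeval z) hker, ?_⟩
  exact aeval_X z

lemma quotient_algHom_ext {A' : Type*} [CommRing A'] [Algebra K A']
    (f g : (K[X] ⧸ Ideal.span {X ^ 2 + C a * X + C b}) →ₐ[K] A')
    (h : f (Ideal.Quotient.mk (Ideal.span {X ^ 2 + C a * X + C b}) X) =
      g (Ideal.Quotient.mk (Ideal.span {X ^ 2 + C a * X + C b}) X)) : f = g := by
  apply Ideal.Quotient.algHom_ext
  apply Polynomial.algHom_ext
  exact h

end Quotient

/-- For `a ∈ 𝔞⁻¹`, `b ∈ 𝔞⁻²`, let `S_{a,b}` be the `R`-subalgebra of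
`K[X]/(X² + aX + b)` with underlying module `R·1 + 𝔞·ξ` (`ξ` the image of `X`).
Then `S_{a,b} ≅ S_{a',b'}` as `R`-algebras iff there are `u ∈ 𝔞⁻¹` and `λ ∈ Rˣ`
with `a' = aλ + 2u` and `b' = bλ² + uaλ + u²`. -/
theorem stmt_3 {R K : Type*} [CommRing R] [IsDedekindDomain R] [Field K] [Algebra R K]
    [IsFractionRing R K] (𝔞 : FractionalIdeal (nonZeroDivisors R) K) (h𝔞 : 𝔞 ≠ 0)
    (a b a' b' : K) (ha : a ∈ 𝔞⁻¹) (hb : b ∈ 𝔞⁻¹ * 𝔞⁻¹)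
    (ha' : a' ∈ 𝔞⁻¹) (hb' : b' ∈ 𝔞⁻¹ * 𝔞⁻¹)
    (S : Subalgebra R (K[X] ⧸ Ideal.span {X ^ 2 + C a * X + C b}))
    (S' : Subalgebra R (K[X] ⧸ Ideal.span {X ^ 2 + C a' * X + C b'}))
    (hS : (S : Set (K[X] ⧸ Ideal.span {X ^ 2 + C a * X + C b})) =
      {z | ∃ r : R, ∃ x ∈ 𝔞, z =
        algebraMap R (K[X] ⧸ Ideal.span {X ^ 2 + C a * X + C b}) r +
        algebraMap K (K[X] ⧸ Ideal.span {X ^ 2 + C a * X + C b}) x *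
          Ideal.Quotient.mk (Ideal.span {X ^ 2 + C a * X + C b}) X})
    (hS' : (S' : Set (K[X] ⧸ Ideal.span {X ^ 2 + C a' * X + C b'})) =
      {z | ∃ r : R, ∃ x ∈ 𝔞, z =
        algebraMap R (K[X] ⧸ Ideal.span {X ^ 2 + C a' * X + C b'}) r +
        algebraMap K (K[X] ⧸ Ideal.span {X ^ 2 + C a' * X + C b'}) x *
          Ideal.Quotient.mk (Ideal.span {X ^ 2 + C a' * X + C b'}) X}) :
    Nonempty (S ≃ₐ[R] S') ↔
      ∃ u ∈ (𝔞⁻¹ : FractionalIdeal (nonZeroDivisors R) K), ∃ lam : Rˣ,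
        a' = a * algebraMap R K lam + 2 * u ∧
        b' = b * (algebraMap R K lam) ^ 2 + u * a * algebraMap R K lam + u ^ 2 := by
  have hS1 := fun z => Set.ext_iff.1 hS z
  have hS1' := fun z => Set.ext_iff.1 hS' z
  simp only [SetLike.mem_coe, Set.mem_ofPred_eq] at hS1 hS1'
  constructor
  · rintro ⟨φ⟩
    exact exists_params_of_algEquiv 𝔞 h𝔞 a b a' b' _ _ (root_eq a b) (root_eq a' b') ha hb
      (linearIndependent_one_root a b) (linearIndependent_one_root a' b') S S' hS1 hS1' φ
  · rintro ⟨u, hu, lam, h1, h2⟩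
    have hlam : algebraMap R K (lam⁻¹ : Rˣ) * algebraMap R K lam = 1 := by
      rw [← map_mul, Units.inv_mul, map_one]
    have hu' : -(algebraMap R K (lam⁻¹ : Rˣ) * u) ∈ 𝔞⁻¹ := by
      rw [← Algebra.smul_def]
      exact Submodule.neg_mem _ (Submodule.smul_mem _ _ hu)
    -- the relations are symmetric under `(λ, u) ↦ (λ⁻¹, -λ⁻¹ u)`
    have h1' : a = a' * algebraMap R K (lam⁻¹ : Rˣ) + 2 * -(algebraMap R K (lam⁻¹ : Rˣ) * u) := by
      rw [h1]
      linear_combination -a * hlam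
    have h2' : b = b' * algebraMap R K (lam⁻¹ : Rˣ) ^ 2 +
        -(algebraMap R K (lam⁻¹ : Rˣ) * u) * a' * algebraMap R K (lam⁻¹ : Rˣ) +
          (-(algebraMap R K (lam⁻¹ : Rˣ) * u)) ^ 2 := by
      rw [h1, h2]
      linear_combination -b * (algebraMap R K (lam⁻¹ : Rˣ) * algebraMap R K lam + 1) * hlam
    obtain ⟨f, hf⟩ := exists_algHom_of_root a b _ (transformed_root (root_eq a' b') h1' h2')
    obtain ⟨g, hg⟩ := exists_algHom_of_root a' b' _ (transformed_root (root_eq a b) h1 h2)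
    refine nonempty_algEquiv_of_algHom S S' f g (fun z hz => ?_) (fun z hz => ?_) ?_ ?_
    · refine (hS1' _).2 (map_mem_of_apply_eq 𝔞 h𝔞 _ _ f _ (lam⁻¹ : Rˣ)
        (Submodule.neg_mem _ hu') ?_ z ((hS1 z).1 hz))
      rw [hf, IsScalarTower.algebraMap_apply R K (K[X] ⧸ _)]
    · refine (hS1 _).2 (map_mem_of_apply_eq 𝔞 h𝔞 _ _ g _ lam
        (Submodule.neg_mem _ hu) ?_ z ((hS1' z).1 hz))
      rw [hg, IsScalarTower.algebraMap_apply R K (K[X] ⧸ _)]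
    · apply quotient_algHom_ext
      rw [AlgHom.comp_apply, hf, map_add, map_mul, AlgHom.commutes, AlgHom.commutes, hg,
        mul_add, ← mul_assoc, ← map_mul, ← map_mul, hlam, ← add_assoc, ← map_add, AlgHom.id_apply]
      simp
    · apply quotient_algHom_ext
      rw [AlgHom.comp_apply, hg, map_add, map_mul, AlgHom.commutes, AlgHom.commutes, hf,
        mul_add, ← mul_assoc, ← map_mul, ← map_mul, mul_comm _ (algebraMap R K (lam⁻¹ : Rˣ)), hlam,
        ← add_assoc, ← map_add, neg_neg, ← mul_assoc, mul_comm (algebraMap R K lam), hlam,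
        AlgHom.id_apply]
      simp
end

section
/- Let R be a Dedekind domain with fraction field K, let 𝔞 be a nonzero fractional ideal of R, and let a ∈ 𝔞⁻¹ and b ∈ 𝔞⁻². Let S_{a,b} be the R-subalgebra of K[X]/(X² + aX + b) whose underlying R-module is R·1 + 𝔞·ξ, where ξ is the image of X. Then S_{a,b} is an integral domain if and only if the polynomial X² + aX + b is irreducible over K. -/
/-!
If `f = X² + aX + b` is irreducible, `K[X]/(f)` is a domain and `S` is a subring of it. Otherwise
the monic quadratic `f` has a root `c ∈ K`, so `f = (X - c)(X + a + c)`. Both linear factors are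
nonzero modulo `f` for degree reasons. As `𝔞 ≠ 0` and `K = Frac R`, some nonzero `d ∈ 𝔞` satisfies
`d c, d (a + c) ∈ R`; then `d (ξ - c)` and `d (ξ + a + c)` lie in `S` and are zero divisors there.
-/

open Polynomial

/-- The scalar `d` clearing denominators: a nonzero element of `𝔞` multiplying two given elements
of `K` into `R`. -/
lemma exists_mem_ne_zero_mul_integral {R K : Type*} [CommRing R] [IsDomain R] [Field K]
    [Algebra R K] [IsFractionRing R K] (𝔞 : FractionalIdeal (nonZeroDivisors R) K) (h𝔞 : 𝔞 ≠ 0)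
    (u v : K) :
    ∃ d ∈ 𝔞, d ≠ 0 ∧ (∃ r : R, algebraMap R K r = d * u) ∧ ∃ s : R, algebraMap R K s = d * v := by
  obtain ⟨x, hx, hx0⟩ : ∃ x ∈ 𝔞, x ≠ 0 := by
    by_contra! h
    exact h𝔞 (FractionalIdeal.eq_zero_iff.2 h)
  obtain ⟨p, q, hq, hp⟩ := IsFractionRing.div_surjective (A := R) (x * u)
  obtain ⟨p', q', hq', hp'⟩ := IsFractionRing.div_surjective (A := R) (x * v)
  have hq0 : algebraMap R K q ≠ 0 := IsFractionRing.to_map_ne_zero_of_mem_nonZeroDivisors hq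
  have hq0' : algebraMap R K q' ≠ 0 := IsFractionRing.to_map_ne_zero_of_mem_nonZeroDivisors hq'
  rw [div_eq_iff hq0] at hp
  rw [div_eq_iff hq0'] at hp'
  refine ⟨algebraMap R K (q * q') * x, ?_, ?_, ⟨p * q', ?_⟩, ⟨p' * q, ?_⟩⟩
  · rw [← Algebra.smul_def]
    exact Submodule.smul_mem (𝔞 : Submodule R K) _ hx
  · rw [map_mul]
    exact mul_ne_zero (mul_ne_zero hq0 hq0') hx0
  · rw [map_mul, map_mul, hp]; ring
  · rw [map_mul, map_mul, hp']; ring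

/-- For `a ∈ 𝔞⁻¹`, `b ∈ 𝔞⁻²`, the `R`-subalgebra `S_{a,b} = R·1 + 𝔞·ξ` of
`K[X]/(X² + aX + b)` is an integral domain iff `X² + aX + b` is irreducible over `K`. -/
theorem stmt_4 {R K : Type*} [CommRing R] [IsDedekindDomain R] [Field K] [Algebra R K]
    [IsFractionRing R K] (𝔞 : FractionalIdeal (nonZeroDivisors R) K) (h𝔞 : 𝔞 ≠ 0)
    (a b : K) (ha : a ∈ 𝔞⁻¹) (hb : b ∈ 𝔞⁻¹ * 𝔞⁻¹)
    (S : Subalgebra R (K[X] ⧸ Ideal.span {X ^ 2 + C a * X + C b}))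
    (hS : (S : Set (K[X] ⧸ Ideal.span {X ^ 2 + C a * X + C b})) =
      {z | ∃ r : R, ∃ x ∈ 𝔞, z =
        algebraMap R (K[X] ⧸ Ideal.span {X ^ 2 + C a * X + C b}) r +
        algebraMap K (K[X] ⧸ Ideal.span {X ^ 2 + C a * X + C b}) x *
          Ideal.Quotient.mk (Ideal.span {X ^ 2 + C a * X + C b}) X}) :
    IsDomain S ↔ Irreducible (X ^ 2 + C a * X + C b) := by
  have hdeg : (X ^ 2 + C a * X + C b : K[X]).natDegree = 2 := by compute_degree!
  have hmonic : (X ^ 2 + C a * X + C b : K[X]).Monic := by monicity!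
  constructor
  · intro hdom
    by_contra hirr
    have hroots := mt (Monic.irreducible_iff_roots_eq_zero_of_degree_le_three hmonic
      hdeg.ge (by omega)).2 hirr
    obtain ⟨c, hc⟩ := Multiset.exists_mem_of_ne_zero hroots
    have hc : c ^ 2 + a * c + b = 0 := by simpa using (mem_roots'.1 hc).2
    obtain ⟨d, hd, hd0, ⟨r, hr⟩, s, hs⟩ := exists_mem_ne_zero_mul_integral (R := R) 𝔞 h𝔞 (-c) (a + c)
    have hmem : ∀ (t : R) (e : K), algebraMap R K t = d * e →
        Ideal.Quotient.mk (Ideal.span {X ^ 2 + C a * X + C b}) (C d * (X + C e)) ∈ S := by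
      intro t e ht
      rw [← SetLike.mem_coe, hS]
      refine ⟨t, d, hd, ?_⟩
      rw [IsScalarTower.algebraMap_apply R K (K[X] ⧸ _) t, ht]
      change _ = Ideal.Quotient.mk _ (C (d * e)) + Ideal.Quotient.mk _ (C d) * _
      rw [← map_mul, ← map_add]
      congr 1
      rw [C_mul]; ring
    have hne : ∀ e : K,
        Ideal.Quotient.mk (Ideal.span {X ^ 2 + C a * X + C b}) (C d * (X + C e)) ≠ 0 := by
      intro e h
      rw [Ideal.Quotient.eq_zero_iff_mem, Ideal.mem_span_singleton] at h
      have h0 : C d * (X + C e) ≠ 0 := mul_ne_zero (C_ne_zero.2 hd0) (X_add_C_ne_zero e)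
      have := natDegree_le_of_dvd h h0
      rw [hdeg, natDegree_C_mul hd0, natDegree_X_add_C] at this
      omega
    have hmul : (⟨_, hmem r _ hr⟩ : S) * ⟨_, hmem s _ hs⟩ = 0 := by
      apply Subtype.ext
      change Ideal.Quotient.mk _ _ * Ideal.Quotient.mk _ _ = 0
      rw [← map_mul, Ideal.Quotient.eq_zero_iff_mem, Ideal.mem_span_singleton]
      refine ⟨C d * C d, ?_⟩
      have hb' : b = -(c ^ 2 + a * c) := by linear_combination hc
      rw [hb']
      simp only [map_add, map_neg, map_mul, map_pow]
      ring
    rcases mul_eq_zero.1 hmul with h | h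
    · exact hne _ (congrArg Subtype.val h)
    · exact hne _ (congrArg Subtype.val h)
  · intro hirr
    have : (Ideal.span {X ^ 2 + C a * X + C b}).IsPrime :=
      (Ideal.span_singleton_prime hirr.ne_zero).2 hirr.prime
    infer_instance
end

section
/- Let f and f' be binary cubic forms over ℝ whose reduced discriminants are nonzero and have the same sign (i.e., disc(f)·disc(f') > 0). Then there exists g ∈ GL₂(ℝ) with g·f = f'. That is, GL₂(ℝ) acts transitively on the set of binary cubic forms over ℝ whose reduced discriminant has a given fixed sign. -/
/-!
Over `ℝ` every binary cubic form `f` of nonzero reduced discriminant is equivalent to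
`3x²y + εy³`, where `ε = ±1` is the sign of `disc f`; two forms whose discriminants have the same
sign are then equivalent because equivalence is symmetric and transitive.

To reach the normal form, use that a real cubic has a real root, and move the corresponding point
of the projective line to `(1 : 0)`, so that the `x³` coefficient vanishes
(`exists_cubicRel_leading_zero`). The form is then `y(3bx² + 3cxy + dy²)` with discriminant
`b²(4bd - 3c²)`, so `b ≠ 0`, and completing the square followed by a diagonal scaling gives
`3x²y + εy³` (`cubicRel_normal_form`).
-/

/-- The binary cubic form `ax³ + 3bx²y + 3cxy² + dy³`, as a function on `ℝ²`. -/
def cubicForm (a b c d x y : ℝ) : ℝ :=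
  a * x ^ 3 + 3 * b * x ^ 2 * y + 3 * c * x * y ^ 2 + d * y ^ 3

/-- The reduced discriminant of `cubicForm a b c d`. -/
def cubicDisc (a b c d : ℝ) : ℝ :=
  a ^ 2 * d ^ 2 - 6 * a * b * c * d - 3 * b ^ 2 * c ^ 2 + 4 * a * c ^ 3 + 4 * b ^ 3 * d

/-- `f'` lies in the orbit of `f` under the twisted action of `GL₂(ℝ)`, for arbitrary functions
`f f' : ℝ → ℝ → ℝ`. The group element is the matrix with rows `(p, q)` and `(r, s)`, and the factor
`det⁻¹` is moved to the other side of the equation. -/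
def CubicRel (f f' : ℝ → ℝ → ℝ) : Prop :=
  ∃ p q r s : ℝ, p * s - q * r ≠ 0 ∧
    ∀ x y, f (x * p + y * r) (x * q + y * s) = (p * s - q * r) * f' x y

theorem CubicRel.symm {f f' : ℝ → ℝ → ℝ} (h : CubicRel f f') : CubicRel f' f := by
  obtain ⟨p, q, r, s, hD, h⟩ := h
  have hdet : s / (p * s - q * r) * (p / (p * s - q * r))
      - -q / (p * s - q * r) * (-r / (p * s - q * r)) = (p * s - q * r)⁻¹ := by
    field_simp
  refine ⟨s / (p * s - q * r), -q / (p * s - q * r), -r / (p * s - q * r),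
    p / (p * s - q * r), ?_, fun x y => ?_⟩
  · rw [hdet]
    exact inv_ne_zero hD
  · have h1 := h (x * (s / (p * s - q * r)) + y * (-r / (p * s - q * r)))
      (x * (-q / (p * s - q * r)) + y * (p / (p * s - q * r)))
    rw [hdet, eq_inv_mul_iff_mul_eq₀ hD, ← h1]
    congr 1
    · linear_combination x * mul_inv_cancel₀ hD
    · linear_combination y * mul_inv_cancel₀ hD

theorem CubicRel.trans {f f' f'' : ℝ → ℝ → ℝ} (h : CubicRel f f') (h' : CubicRel f' f'') :
    CubicRel f f'' := by
  obtain ⟨p, q, r, s, hD, h⟩ := h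
  obtain ⟨p', q', r', s', hD', h'⟩ := h'
  have hdet : (p' * p + q' * r) * (r' * q + s' * s) - (p' * q + q' * s) * (r' * p + s' * r)
      = (p * s - q * r) * (p' * s' - q' * r') := by ring
  refine ⟨p' * p + q' * r, p' * q + q' * s, r' * p + s' * r, r' * q + s' * s, ?_, fun x y => ?_⟩
  · rw [hdet]
    exact mul_ne_zero hD hD'
  · rw [hdet, mul_assoc, ← h', ← h]
    congr 1 <;> ring

theorem exists_root_monic_cubic (b c d : ℝ) : ∃ t : ℝ, t ^ 3 + b * t ^ 2 + c * t + d = 0 := by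
  -- At `±M` the leading term dominates the others.
  set M : ℝ := 1 + |b| + |c| + |d| with hM
  have hb := abs_nonneg b
  have hc := abs_nonneg c
  have hd := abs_nonneg d
  have hM1 : 1 ≤ M := by linarith
  have hbM : |b| * M ^ 2 ≤ (M - 1 - |c| - |d|) * M ^ 2 := by
    rw [hM]; apply le_of_eq; ring
  have hcM : |c| * M ≤ |c| * M ^ 2 := mul_le_mul_of_nonneg_left (by nlinarith) hc
  have hdM : |d| ≤ |d| * M ^ 2 := le_mul_of_one_le_right hd (by nlinarith)
  have hM2 : 0 < M ^ 2 := by positivity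
  have hb1 : |b * M ^ 2| = |b| * M ^ 2 := by rw [abs_mul, abs_of_pos hM2]
  have hc1 : |c * M| = |c| * M := by rw [abs_mul, abs_of_pos (by linarith : 0 < M)]
  have hb2 := abs_le.1 hb1.le
  have hc2 := abs_le.1 hc1.le
  have hd2 := abs_le.1 (le_refl |d|)
  have hcont : Continuous fun t : ℝ => t ^ 3 + b * t ^ 2 + c * t + d := by fun_prop
  obtain ⟨t, -, ht⟩ := intermediate_value_Icc (by linarith : -M ≤ M) hcont.continuousOn
    (show (0 : ℝ) ∈ Set.Icc _ _ from ⟨by nlinarith, by nlinarith⟩)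
  exact ⟨t, ht⟩

/-- Moving a real root to the point `(1 : 0)` kills the `x³` coefficient. The matrix used has
determinant `±1`, so the discriminant is unchanged. -/
theorem exists_cubicRel_leading_zero (a b c d : ℝ) :
    ∃ b' c' d', CubicRel (cubicForm a b c d) (cubicForm 0 b' c' d') ∧
      cubicDisc 0 b' c' d' = cubicDisc a b c d := by
  by_cases ha : a = 0
  · subst ha
    exact ⟨b, c, d, ⟨1, 0, 0, 1, by norm_num, fun x y => by simp⟩, rfl⟩
  obtain ⟨t, ht⟩ := exists_root_monic_cubic (3 * b / a) (3 * c / a) (d / a)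
  have ht' : a * t ^ 3 + 3 * b * t ^ 2 + 3 * c * t + d = 0 := by
    field_simp at ht
    linarith
  refine ⟨-(a * t ^ 2 + 2 * b * t + c), -(a * t + b), -a,
    ⟨t, 1, 1, 0, by norm_num, fun x y => ?_⟩, ?_⟩
  · simp only [cubicForm]
    linear_combination x ^ 3 * ht'
  · obtain rfl : d = -(a * t ^ 3 + 3 * b * t ^ 2 + 3 * c * t) := by linarith
    simp only [cubicDisc]
    ring

theorem cubicRel_normal_form {a b c d e : ℝ} (he : e = 1 ∨ e = -1)
    (h : 0 < e * cubicDisc a b c d) :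
    CubicRel (cubicForm a b c d) (cubicForm 0 1 0 e) := by
  obtain ⟨b', c', d', hrel, hdisc⟩ := exists_cubicRel_leading_zero a b c d
  refine hrel.trans ?_
  rw [← hdisc] at h
  clear hrel hdisc a b c d
  have hdisc : cubicDisc 0 b' c' d' = b' ^ 2 * (4 * b' * d' - 3 * c' ^ 2) := by
    simp only [cubicDisc]
    ring
  rw [hdisc] at h
  have hb : b' ≠ 0 := by
    rintro rfl
    simp at h
  have hk : 0 < e * (4 * b' * d' - 3 * c' ^ 2) := by
    have hb2 : 0 < b' ^ 2 := by positivity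
    refine pos_of_mul_pos_right (b := e * (4 * b' * d' - 3 * c' ^ 2)) (a := b' ^ 2) ?_ hb2.le
    linarith
  -- After `x ↦ x - (c/2b)y` the form is `3bx²y + (k/4b)y³` with `k = 4bd - 3c²`; substituting
  -- `(x/b, uy)` turns this into `det` times `3x²y + (k/4)u²y³`, whence `u = 2/√|k|`.
  set w := Real.sqrt (e * (4 * b' * d' - 3 * c' ^ 2)) with hw
  have hw0 : w ≠ 0 := (Real.sqrt_pos.2 hk).ne'
  have hw2 : w ^ 2 = e * (4 * b' * d' - 3 * c' ^ 2) := Real.sq_sqrt hk.le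
  have he2 : e ^ 2 = 1 := by rcases he with rfl | rfl <;> norm_num
  have hk' : 4 * b' * d' = e * w ^ 2 + 3 * c' ^ 2 := by
    rw [hw2]
    linear_combination -(4 * b' * d' - 3 * c' ^ 2) * he2
  clear_value w
  obtain rfl : d' = (e * w ^ 2 + 3 * c' ^ 2) / (4 * b') := by
    field_simp
    linarith
  refine ⟨1 / b', 0, -c' / (b' * w), 2 / w, ?_, fun x y => ?_⟩
  · simp [hb, hw0]
  · simp only [cubicForm]
    field_simp
    ring

/-- `GL₂(ℝ)` acts transitively on binary cubic forms `ax³ + 3bx²y + 3cxy² + dy³`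
over `ℝ` whose reduced discriminant has a given fixed sign, where
`(g·f)(x,y) = det(g)⁻¹ · f((x,y)g)`. -/
theorem stmt_6 (a b c d a' b' c' d' : ℝ)
    (h : (a ^ 2 * d ^ 2 - 6 * a * b * c * d - 3 * b ^ 2 * c ^ 2
        + 4 * a * c ^ 3 + 4 * b ^ 3 * d) *
      (a' ^ 2 * d' ^ 2 - 6 * a' * b' * c' * d' - 3 * b' ^ 2 * c' ^ 2
        + 4 * a' * c' ^ 3 + 4 * b' ^ 3 * d') > 0) :
    ∃ g : Matrix (Fin 2) (Fin 2) ℝ, g.det ≠ 0 ∧ ∀ x y : ℝ,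
      (g.det)⁻¹ *
        (a * (x * g 0 0 + y * g 1 0) ^ 3
          + 3 * b * (x * g 0 0 + y * g 1 0) ^ 2 * (x * g 0 1 + y * g 1 1)
          + 3 * c * (x * g 0 0 + y * g 1 0) * (x * g 0 1 + y * g 1 1) ^ 2
          + d * (x * g 0 1 + y * g 1 1) ^ 3)
        = a' * x ^ 3 + 3 * b' * x ^ 2 * y + 3 * c' * x * y ^ 2 + d' * y ^ 3 := by
  have hrel : CubicRel (cubicForm a b c d) (cubicForm a' b' c' d') := by
    change cubicDisc a b c d * cubicDisc a' b' c' d' > 0 at h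
    rcases mul_pos_iff.1 h with ⟨h1, h2⟩ | ⟨h1, h2⟩
    · exact (cubicRel_normal_form (.inl rfl) (by linarith)).trans
        (cubicRel_normal_form (.inl rfl) (by linarith)).symm
    · exact (cubicRel_normal_form (.inr rfl) (by linarith)).trans
        (cubicRel_normal_form (.inr rfl) (by linarith)).symm
  obtain ⟨p, q, r, s, hD, hg⟩ := hrel
  have hdet : (!![p, q; r, s] : Matrix (Fin 2) (Fin 2) ℝ).det = p * s - q * r :=
    Matrix.det_fin_two_of p q r s
  refine ⟨!![p, q; r, s], hdet ▸ hD, fun x y => ?_⟩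
  rw [hdet, inv_mul_eq_iff_eq_mul₀ hD]
  exact hg x y
end

section
/- Let f be a binary cubic form over ℝ with nonzero reduced discriminant. If disc(f) > 0, then the stabilizer {g ∈ GL₂(ℝ) : g·f = f} has exactly 2 elements; if disc(f) < 0, then it has exactly 6 elements. -/
/-!
The stabilizer of a form only depends, up to conjugation, on its `GL₂(ℝ)`-orbit, so it suffices to
compute it for one representative of each orbit. A real binary cubic form has a real linear factor,
so it can be moved to a form with `a = 0`; nondegeneracy then forces `b ≠ 0`, and a
lower triangular substitution (completing the square and rescaling) brings it to `3x²y + y³` when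
the reduced discriminant is positive and to `3x²y - 3y³` when it is negative.

For these two forms the stabilizer is found by comparing coefficients. The linear factor `y` is
either fixed, which gives the two matrices `diag(1, ±1)`, or moved to another real linear factor;
the latter is impossible for `3x²y + y³` and gives four more matrices for
`3x²y - 3y³ = 3y(x - y)(x + y)`.
-/

namespace BinaryCubic

/-- The twisted action `(g·f)(x, y) = det(g)⁻¹ f((x, y)g)`, on arbitrary functions of two real
variables. -/
noncomputable def act (g : Matrix (Fin 2) (Fin 2) ℝ) (f : ℝ → ℝ → ℝ) : ℝ → ℝ → ℝ := fun x y =>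
  (g.det)⁻¹ * f (x * g 0 0 + y * g 1 0) (x * g 0 1 + y * g 1 1)

/-- The binary cubic form `ax³ + 3bx²y + 3cxy² + dy³`, as a function. -/
def cubic (a b c d : ℝ) : ℝ → ℝ → ℝ := fun x y =>
  a * x ^ 3 + 3 * b * x ^ 2 * y + 3 * c * x * y ^ 2 + d * y ^ 3

/-- The reduced discriminant. -/
def disc (a b c d : ℝ) : ℝ :=
  a ^ 2 * d ^ 2 - 6 * a * b * c * d - 3 * b ^ 2 * c ^ 2 + 4 * a * c ^ 3 + 4 * b ^ 3 * d

/-- The stabilizer of `f` in `GL₂(ℝ)`, as a set of matrices of nonzero determinant. -/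
def stab (f : ℝ → ℝ → ℝ) : Set (Matrix (Fin 2) (Fin 2) ℝ) := {g | g.det ≠ 0 ∧ act g f = f}

lemma act_act (g h : Matrix (Fin 2) (Fin 2) ℝ) (f : ℝ → ℝ → ℝ) :
    act g (act h f) = act (g * h) f := by
  funext x y
  simp only [act, Matrix.det_mul, mul_inv, Matrix.mul_apply, Fin.sum_univ_two]
  rw [← mul_assoc]
  congr 2 <;> ring

lemma act_one (f : ℝ → ℝ → ℝ) : act 1 f = f := by
  funext x y
  simp [act]

lemma ncard_stab_act (h : Matrix (Fin 2) (Fin 2) ℝ) (hh : h.det ≠ 0) (f : ℝ → ℝ → ℝ) :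
    (stab (act h f)).ncard = (stab f).ncard := by
  have hu : IsUnit h.det := isUnit_iff_ne_zero.mpr hh
  have h1 : h * h⁻¹ = 1 := Matrix.mul_nonsing_inv h hu
  have h2 : h⁻¹ * h = 1 := Matrix.nonsing_inv_mul h hu
  have hi : (h⁻¹).det ≠ 0 := by
    intro h0
    have := congrArg Matrix.det h1
    simp [h0] at this
  symm
  refine Set.ncard_congr (fun g _ => h * g * h⁻¹) ?_ ?_ ?_
  · rintro g ⟨hg, hgf⟩
    refine ⟨by simp only [Matrix.det_mul]; exact mul_ne_zero (mul_ne_zero hh hg) hi, ?_⟩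
    rw [act_act, mul_assoc, h2, mul_one, ← act_act, hgf]
  · intro g k _ _ hgk
    have := congrArg (fun m => h⁻¹ * m * h) hgk
    simpa only [mul_assoc, h2, mul_one, ← mul_assoc h⁻¹ h, one_mul] using this
  · rintro k ⟨hk, hkf⟩
    refine ⟨h⁻¹ * k * h, ⟨?_, ?_⟩, ?_⟩
    · simp only [Matrix.det_mul]
      exact mul_ne_zero (mul_ne_zero hi hk) hh
    · rw [← act_act, ← act_act, hkf, act_act, h2, act_one]
    · simp only [mul_assoc, h1, mul_one]
      rw [← mul_assoc, h1, one_mul]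

lemma exists_root (p q r : ℝ) : ∃ t : ℝ, t ^ 3 + p * t ^ 2 + q * t + r = 0 := by
  -- The bound `M` makes the leading term dominate at `±M`.
  obtain ⟨M, hM⟩ : ∃ M, M = 1 + |p| + |q| + |r| := ⟨_, rfl⟩
  have hp := abs_nonneg p
  have hq := abs_nonneg q
  have hr := abs_nonneg r
  have hM1 : 1 ≤ M := by linarith
  have hM2 : M ≤ M ^ 2 := by nlinarith
  have e : M ^ 3 = M ^ 2 + |p| * M ^ 2 + |q| * M ^ 2 + |r| * M ^ 2 := by
    calc M ^ 3 = M ^ 2 * M := by ring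
      _ = _ := by rw [hM]; ring
  have e1 : |q| * M ≤ |q| * M ^ 2 := mul_le_mul_of_nonneg_left hM2 hq
  have e2 : |r| ≤ |r| * M ^ 2 := by nlinarith
  have p1 : p * M ^ 2 ≤ |p| * M ^ 2 := mul_le_mul_of_nonneg_right (le_abs_self p) (by positivity)
  have p2 : -p * M ^ 2 ≤ |p| * M ^ 2 := mul_le_mul_of_nonneg_right (neg_le_abs p) (by positivity)
  have q2 : -q * M ≤ |q| * M := mul_le_mul_of_nonneg_right (neg_le_abs q) (by linarith)
  have r1 := le_abs_self r
  have r2 := neg_le_abs r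
  have hc : ContinuousOn (fun t : ℝ => t ^ 3 + p * t ^ 2 + q * t + r) (Set.Icc (-M) M) := by
    fun_prop
  have := intermediate_value_Icc (by linarith : -M ≤ M) hc
  obtain ⟨t, -, ht⟩ := this (show (0 : ℝ) ∈ Set.Icc _ _ by
    constructor
    · nlinarith
    · nlinarith)
  exact ⟨t, ht⟩

/-- A real linear factor can be moved to `y`, without changing the discriminant. -/
lemma exists_act_zero (a b c d : ℝ) : ∃ (h : Matrix (Fin 2) (Fin 2) ℝ) (b' c' d' : ℝ),
    h.det ≠ 0 ∧ act h (cubic a b c d) = cubic 0 b' c' d' ∧ disc 0 b' c' d' = disc a b c d := by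
  by_cases ha : a = 0
  · subst ha
    exact ⟨1, b, c, d, by simp, act_one _, rfl⟩
  · obtain ⟨t, ht⟩ := exists_root (3 * b / a) (3 * c / a) (d / a)
    have hd : d = -(a * t ^ 3 + 3 * b * t ^ 2 + 3 * c * t) := by
      field_simp at ht
      linarith
    refine ⟨!![t, 1; 1, 0], -(a * t ^ 2 + 2 * b * t + c), -(a * t + b), -a, by simp, ?_, ?_⟩
    · funext x y
      simp only [act, cubic, Matrix.det_fin_two_of, Matrix.of_apply,
        Matrix.cons_val', Matrix.cons_val_zero, Matrix.cons_val_one, Matrix.cons_val_fin_one, hd]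
      norm_num
      ring
    · rw [hd]
      simp only [disc]
      ring

/-- A lower triangular substitution normalizes a form with `a = 0`; here `u` is the free scaling
of `y`, and `4bd - 3c²` has the sign of the discriminant `b²(4bd - 3c²)`. -/
lemma exists_act_normal (b c d u : ℝ) (hb : b ≠ 0) (hu : u ≠ 0) :
    ∃ h : Matrix (Fin 2) (Fin 2) ℝ, h.det ≠ 0 ∧
      act h (cubic 0 b c d) = cubic 0 1 0 (u ^ 2 * (4 * b * d - 3 * c ^ 2) / 4) := by
  refine ⟨!![1 / b, 0; -(c * u) / (2 * b), u], by simp [hb, hu], ?_⟩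
  funext x y
  simp only [act, cubic, Matrix.det_fin_two_of, Matrix.of_apply, Matrix.cons_val', Matrix.cons_val_zero,
    Matrix.cons_val_one, Matrix.cons_val_fin_one]
  field_simp
  ring

/-- Comparing coefficients describes the stabilizer of `3x²y + ey³` by polynomial equations in the
matrix entries; `D` is the determinant. -/
lemma mem_stab_iff (e : ℝ) (g : Matrix (Fin 2) (Fin 2) ℝ) :
    g ∈ stab (cubic 0 1 0 e) ↔ ∃ D : ℝ, D ≠ 0 ∧ D = g 0 0 * g 1 1 - g 0 1 * g 1 0 ∧
      g 0 1 * (3 * g 0 0 ^ 2 + e * g 0 1 ^ 2) = 0 ∧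
      g 0 0 ^ 2 * g 1 1 + 2 * g 0 0 * g 0 1 * g 1 0 + e * g 0 1 ^ 2 * g 1 1 = D ∧
      2 * g 0 0 * g 1 0 * g 1 1 + g 1 0 ^ 2 * g 0 1 + e * g 0 1 * g 1 1 ^ 2 = 0 ∧
      3 * g 1 0 ^ 2 * g 1 1 + e * g 1 1 ^ 3 = e * D := by
  obtain ⟨D, hD⟩ : ∃ D, D = g.det := ⟨_, rfl⟩
  have hD' := hD
  rw [Matrix.det_fin_two] at hD'
  simp only [stab, Set.mem_ofPred_eq, funext_iff, act, cubic, ← hD]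
  generalize g 0 0 = p at *
  generalize g 0 1 = q at *
  generalize g 1 0 = r at *
  generalize g 1 1 = s at *
  constructor
  · rintro ⟨h0, h⟩
    have key : ∀ x y : ℝ, 3 * (x * p + y * r) ^ 2 * (x * q + y * s) + e * (x * q + y * s) ^ 3
        = D * (3 * x ^ 2 * y + e * y ^ 3) := by
      intro x y
      have := h x y
      field_simp at this
      linear_combination this
    have k1 := key 1 0
    have k2 := key 0 1
    have k3 := key 1 1
    have k4 := key 1 (-1)
    refine ⟨D, h0, hD', ?_, ?_, ?_, ?_⟩
    · linear_combination k1
    · linear_combination k3 / 6 - k4 / 6 - k2 / 3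
    · linear_combination k3 / 6 + k4 / 6 - k1 / 3
    · linear_combination k2
  · rintro ⟨D', h0, h1, h2, h3, h4, h5⟩
    have : D' = D := by rw [h1, hD']
    subst this
    refine ⟨h0, fun x y => ?_⟩
    field_simp
    linear_combination x ^ 3 * h2 + 3 * x ^ 2 * y * h3 + 3 * x * y ^ 2 * h4 + y ^ 3 * h5

/-- A matrix `!![p, 0; r, s]` that stabilizes `3x²y + ey³` is `diag(1, ±1)`. -/
lemma diag_of_fix {e p r s D : ℝ} (he : e ≠ 0) (hD : D ≠ 0) (h1 : D = p * s)
    (h3 : p ^ 2 * s = D) (h4 : 2 * p * r * s = 0) (h5 : 3 * r ^ 2 * s + e * s ^ 3 = e * D) :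
    p = 1 ∧ r = 0 ∧ (s = 1 ∨ s = -1) := by
  subst h1
  have hp : p ≠ 0 := left_ne_zero_of_mul hD
  have hs : s ≠ 0 := right_ne_zero_of_mul hD
  have p1 : p = 1 := by
    apply mul_left_cancel₀ hD
    linear_combination h3
  have r0 : r = 0 := by
    apply mul_left_cancel₀ hD
    linear_combination h4 / 2
  subst p1 r0
  refine ⟨rfl, rfl, sq_eq_sq_iff_eq_or_eq_neg.mp ?_⟩
  apply mul_left_cancel₀ (mul_ne_zero he hs)
  linear_combination h5

lemma stab_pos : stab (cubic 0 1 0 1) = {!![1, 0; 0, 1], !![1, 0; 0, -1]} := by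
  ext g
  rw [mem_stab_iff]
  constructor
  · rintro ⟨D, h0, h1, h2, h3, h4, h5⟩
    have hq : g 0 1 = 0 := by
      rcases mul_eq_zero.mp h2 with h | h
      · exact h
      · nlinarith [sq_nonneg (g 0 0), sq_nonneg (g 0 1)]
    rw [hq] at h1 h3 h4
    obtain ⟨hp, hr, hs⟩ := diag_of_fix (p := g 0 0) one_ne_zero h0 (by linarith) (by linarith) (by linarith) h5
    rw [Matrix.eta_fin_two g, hp, hq, hr]
    rcases hs with hs | hs <;> simp [hs]
  · rintro (rfl | rfl)
    · exact ⟨1, by norm_num⟩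
    · exact ⟨-1, by norm_num⟩

lemma stab_neg : stab (cubic 0 1 0 (-3)) =
    {!![1, 0; 0, 1], !![1, 0; 0, -1],
      !![-1 / 2, -1 / 2; -3 / 2, 1 / 2], !![-1 / 2, -1 / 2; 3 / 2, -1 / 2],
      !![-1 / 2, 1 / 2; 3 / 2, 1 / 2], !![-1 / 2, 1 / 2; -3 / 2, -1 / 2]} := by
  ext g
  rw [mem_stab_iff]
  constructor
  · rintro ⟨D, h0, h1, h2, h3, h4, h5⟩
    by_cases hq : g 0 1 = 0
    · rw [hq] at h1 h3 h4
      obtain ⟨hp, hr, hs⟩ := diag_of_fix (p := g 0 0) (by norm_num) h0 (by linarith) (by linarith)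
        (by linarith) h5
      rw [Matrix.eta_fin_two g, hp, hq, hr]
      rcases hs with hs | hs <;> simp [hs]
    · rw [Matrix.eta_fin_two g]
      generalize g 0 0 = p at *
      generalize g 0 1 = q at *
      generalize g 1 0 = r at *
      generalize g 1 1 = s at *
      -- The first row `(p, q)` is a zero of the form with `q ≠ 0`, hence lies on `x = ε y`.
      obtain ⟨ε, hε, hp⟩ : ∃ ε : ℝ, (ε = 1 ∨ ε = -1) ∧ p = ε * q := by
        have h := (mul_eq_zero.mp h2).resolve_left hq
        rcases sq_eq_sq_iff_eq_or_eq_neg.mp (show p ^ 2 = q ^ 2 by linarith) with h | h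
        · exact ⟨1, Or.inl rfl, by linarith⟩
        · exact ⟨-1, Or.inr rfl, by linarith⟩
      have hε2 : ε ^ 2 = 1 := by rcases hε with h | h <;> rw [h] <;> norm_num
      subst hp
      have hqe : q = -ε / 2 := by
        have h : s - ε * r ≠ 0 := by
          intro h
          apply h0
          linear_combination h1 + ε * q * h + r * q * hε2
        apply mul_left_cancel₀ (mul_ne_zero hq h)
        rw [h1] at h3
        rcases hε with rfl | rfl <;> linear_combination -h3 / 2
      subst hqe
      have hsr : s - ε * r ≠ 0 := by
        intro h
        apply h0
        rcases hε with rfl | rfl <;> linear_combination h1 - h / 2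
      have hr : r = -3 * ε * s := by
        apply mul_left_cancel₀ hsr
        rcases hε with rfl | rfl
        · linear_combination 2 * h4
        · linear_combination 2 * h4
      subst hr
      have hs0 : s ≠ 0 := by
        rintro rfl
        simp at hsr
      have hs : s = 1 / 2 ∨ s = -1 / 2 := by
        have : s ^ 2 = (1 / 2) ^ 2 := by
          apply mul_left_cancel₀ hs0
          rw [h1] at h5
          rcases hε with rfl | rfl <;> linear_combination h5 / 24
        rcases sq_eq_sq_iff_eq_or_eq_neg.mp this with h | h
        · exact Or.inl h
        · exact Or.inr (by linarith)
      rcases hε with rfl | rfl <;> rcases hs with rfl | rfl <;> norm_num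
  · rintro (rfl | rfl | rfl | rfl | rfl | rfl)
    · exact ⟨1, by norm_num⟩
    · exact ⟨-1, by norm_num⟩
    · exact ⟨-1, by norm_num⟩
    · exact ⟨1, by norm_num⟩
    · exact ⟨-1, by norm_num⟩
    · exact ⟨1, by norm_num⟩

lemma ncard_stab_pos : (stab (cubic 0 1 0 1)).ncard = 2 := by
  rw [stab_pos, Set.ncard_pair]
  intro h
  have := congrFun (congrFun h 1) 1
  norm_num at this

lemma ncard_stab_neg : (stab (cubic 0 1 0 (-3))).ncard = 6 := by
  rw [stab_neg]
  repeat rw [Set.ncard_insert_of_notMem]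
  · simp
  all_goals
    simp only [Set.mem_insert_iff, Set.mem_singleton_iff, ← Matrix.ext_iff, Fin.forall_fin_two]
    norm_num

/-- The orbit of `cubic a b c d` contains `3x²y + ey³` for every `e` of the sign of the
discriminant, so the two stabilizers have the same number of elements. -/
lemma ncard_stab_eq (a b c d e : ℝ) (h : 0 < e * disc a b c d) :
    (stab (cubic a b c d)).ncard = (stab (cubic 0 1 0 e)).ncard := by
  obtain ⟨h₁, b', c', d', hd₁, ha₁, hdisc⟩ := exists_act_zero a b c d
  obtain ⟨E, hE⟩ : ∃ E, E = 4 * b' * d' - 3 * c' ^ 2 := ⟨_, rfl⟩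
  have hdE : disc a b c d = b' ^ 2 * E := by
    rw [← hdisc, hE]
    simp only [disc]
    ring
  rw [hdE] at h
  have hb : b' ≠ 0 := by
    rintro rfl
    simp at h
  have heE : 0 < e * E := by
    have : 0 < b' ^ 2 := by positivity
    exact (mul_pos_iff_of_pos_left this).mp (by linarith : 0 < b' ^ 2 * (e * E))
  have hE0 : E ≠ 0 := right_ne_zero_of_mul (ne_of_gt heE)
  -- The scaling of `y` is chosen so that `u² E / 4 = e`.
  have hq : 0 < 4 * e / E := by
    rw [show 4 * e / E = 4 * (e * E) / E ^ 2 by field_simp]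
    positivity
  obtain ⟨h₂, hd₂, ha₂⟩ := exists_act_normal b' c' d' (√(4 * e / E)) hb (Real.sqrt_pos.mpr hq).ne'
  rw [Real.sq_sqrt hq.le, ← hE, show 4 * e / E * E / 4 = e by field_simp] at ha₂
  rw [← ncard_stab_act h₁ hd₁, ha₁, ← ncard_stab_act h₂ hd₂, ha₂]

end BinaryCubic


/-- Stabilizers of nondegenerate real binary cubic forms in `GL₂(ℝ)`: the stabilizer
of `f = ax³ + 3bx²y + 3cxy² + dy³` has exactly 2 elements if the reduced discriminant
of `f` is positive, and exactly 6 elements if it is negative. -/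
theorem stmt_7 (a b c d : ℝ) :
    (0 < a ^ 2 * d ^ 2 - 6 * a * b * c * d - 3 * b ^ 2 * c ^ 2
        + 4 * a * c ^ 3 + 4 * b ^ 3 * d →
      {g : Matrix (Fin 2) (Fin 2) ℝ | g.det ≠ 0 ∧ ∀ x y : ℝ,
        (g.det)⁻¹ *
          (a * (x * g 0 0 + y * g 1 0) ^ 3
            + 3 * b * (x * g 0 0 + y * g 1 0) ^ 2 * (x * g 0 1 + y * g 1 1)
            + 3 * c * (x * g 0 0 + y * g 1 0) * (x * g 0 1 + y * g 1 1) ^ 2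
            + d * (x * g 0 1 + y * g 1 1) ^ 3)
          = a * x ^ 3 + 3 * b * x ^ 2 * y + 3 * c * x * y ^ 2 + d * y ^ 3}.ncard = 2) ∧
    (a ^ 2 * d ^ 2 - 6 * a * b * c * d - 3 * b ^ 2 * c ^ 2
        + 4 * a * c ^ 3 + 4 * b ^ 3 * d < 0 →
      {g : Matrix (Fin 2) (Fin 2) ℝ | g.det ≠ 0 ∧ ∀ x y : ℝ,
        (g.det)⁻¹ *
          (a * (x * g 0 0 + y * g 1 0) ^ 3
            + 3 * b * (x * g 0 0 + y * g 1 0) ^ 2 * (x * g 0 1 + y * g 1 1)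
            + 3 * c * (x * g 0 0 + y * g 1 0) * (x * g 0 1 + y * g 1 1) ^ 2
            + d * (x * g 0 1 + y * g 1 1) ^ 3)
          = a * x ^ 3 + 3 * b * x ^ 2 * y + 3 * c * x * y ^ 2 + d * y ^ 3}.ncard = 6) := by
  have hs : {g : Matrix (Fin 2) (Fin 2) ℝ | g.det ≠ 0 ∧ ∀ x y : ℝ,
        (g.det)⁻¹ *
          (a * (x * g 0 0 + y * g 1 0) ^ 3
            + 3 * b * (x * g 0 0 + y * g 1 0) ^ 2 * (x * g 0 1 + y * g 1 1)
            + 3 * c * (x * g 0 0 + y * g 1 0) * (x * g 0 1 + y * g 1 1) ^ 2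
            + d * (x * g 0 1 + y * g 1 1) ^ 3)
          = a * x ^ 3 + 3 * b * x ^ 2 * y + 3 * c * x * y ^ 2 + d * y ^ 3}
      = BinaryCubic.stab (BinaryCubic.cubic a b c d) := by
    ext g
    simp only [BinaryCubic.stab, BinaryCubic.act, BinaryCubic.cubic, Set.mem_ofPred_eq,
      funext_iff]
  rw [hs]
  constructor
  · intro h
    rw [BinaryCubic.ncard_stab_eq a b c d 1 (by simp only [BinaryCubic.disc]; linarith),
      BinaryCubic.ncard_stab_pos]
  · intro h
    rw [BinaryCubic.ncard_stab_eq a b c d (-3) (by simp only [BinaryCubic.disc]; linarith),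
      BinaryCubic.ncard_stab_neg]
end

section
/- Let f be a binary cubic form over ℂ with nonzero reduced discriminant. Then the stabilizer {g ∈ GL₂(ℂ) : g·f = f} has exactly 6 elements. -/
/-!
Over `ℂ` the form `f` is a product of three linear forms, and `-27 * disc f` is the product of the
squares of their pairwise determinants, so these are pairwise independent. Rescaling them by
those determinants gives a matrix `P ∈ GL₂(ℂ)` with `f = P · (x y (x + y))`
(`exists_equiv_model`). Stabilizers of equivalent forms are conjugate, and the stabilizer of
`x y (x + y)` consists of the six integer matrices permuting the three lines
(`stab_model`), where the twist by `det⁻¹` removes the freedom of rescaling.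
-/

open Matrix

/-- The stabilizer of a function `F` on row vectors under `(g · F)(v) = det(g)⁻¹ F(v g)`. -/
def twistedStab (F : (Fin 2 → ℂ) → ℂ) : Set (Matrix (Fin 2) (Fin 2) ℂ) :=
  {g | g.det ≠ 0 ∧ ∀ v, g.det⁻¹ * F (v ᵥ* g) = F v}

/-- The binary cubic form `x y (x + y)`. -/
def modelCubic (v : Fin 2 → ℂ) : ℂ := v 0 * v 1 * (v 0 + v 1)

/-- The stabilizer of `P · F` is `P (Stab F) P⁻¹`. -/
lemma mem_twistedStab_conj {F G : (Fin 2 → ℂ) → ℂ} {P : Matrix (Fin 2) (Fin 2) ℂ}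
    (hP : P.det ≠ 0) (hG : ∀ v, G v = P.det⁻¹ * F (v ᵥ* P)) (g : Matrix (Fin 2) (Fin 2) ℂ) :
    P * g * P⁻¹ ∈ twistedStab G ↔ g ∈ twistedStab F := by
  have hu : IsUnit P.det := isUnit_iff_ne_zero.2 hP
  have hdet : (P * g * P⁻¹).det = g.det := Matrix.det_conj ((Matrix.isUnit_iff_isUnit_det _).2 hu) g
  have hv : ∀ v : Fin 2 → ℂ, (v ᵥ* (P * g * P⁻¹)) ᵥ* P = (v ᵥ* P) ᵥ* g := by
    intro v
    rw [vecMul_vecMul, vecMul_vecMul, nonsing_inv_mul_cancel_right _ _ hu]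
  unfold twistedStab
  simp only [Set.mem_ofPred_eq, hdet, hG, hv]
  refine and_congr_right fun _ => ⟨fun H w => ?_, fun H v => ?_⟩
  · have := H (w ᵥ* P⁻¹)
    rw [vecMul_vecMul w, nonsing_inv_mul _ hu, vecMul_one, mul_left_comm] at this
    exact mul_left_cancel₀ (inv_ne_zero hP) this
  · rw [mul_left_comm, H]

lemma ncard_twistedStab_conj {F G : (Fin 2 → ℂ) → ℂ} {P : Matrix (Fin 2) (Fin 2) ℂ}
    (hP : P.det ≠ 0) (hG : ∀ v, G v = P.det⁻¹ * F (v ᵥ* P)) :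
    (twistedStab G).ncard = (twistedStab F).ncard := by
  have hu : IsUnit P.det := isUnit_iff_ne_zero.2 hP
  symm
  refine Set.ncard_congr (fun g _ => P * g * P⁻¹) (fun g hg => ?_) (fun g g' _ _ e => ?_)
    (fun g hg => ⟨P⁻¹ * g * P, ?_, ?_⟩)
  · exact (mem_twistedStab_conj hP hG g).2 hg
  · have e' := congrArg (fun M => P⁻¹ * (M * P)) e
    simpa [nonsing_inv_mul_cancel_right _ _ hu, nonsing_inv_mul_cancel_left _ _ hu] using e'
  · rw [← mem_twistedStab_conj hP hG]
    simpa [mul_assoc, mul_nonsing_inv _ hu, mul_nonsing_inv_cancel_left _ _ hu] using hg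
  · simp [mul_assoc, mul_nonsing_inv _ hu, mul_nonsing_inv_cancel_left _ _ hu]

/-- The six matrices permute the three lines `x = 0`, `y = 0`, `x + y = 0`. -/
lemma stab_model : twistedStab modelCubic =
    {!![1, 0; 0, 1], !![1, 0; 1, -1], !![0, -1; -1, 0], !![0, -1; 1, -1],
      !![-1, 1; 0, 1], !![-1, 1; -1, 0]} := by
  ext g
  constructor
  · rintro ⟨hd, H⟩
    obtain ⟨p, q, r, s, rfl⟩ : ∃ p q r s, g = !![p, q; r, s] := ⟨_, _, _, _, eta_fin_two g⟩
    rw [det_fin_two_of] at hd H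
    have H' : ∀ x y : ℂ, (x * p + y * r) * (x * q + y * s) * (x * p + y * r + (x * q + y * s))
        = (p * s - q * r) * (x * y * (x + y)) := by
      intro x y
      have := H ![x, y]
      rw [inv_mul_eq_iff_eq_mul₀ hd] at this
      simpa [modelCubic, vecMul, dotProduct, Fin.sum_univ_two] using this
    have h10 : p * q * (p + q) = 0 := by linear_combination H' 1 0
    have h01 : r * s * (r + s) = 0 := by linear_combination H' 0 1
    -- The coefficients of `x² y` and `x y²`, by interpolation at `(1, ±1)`.
    have h1 : p * q * (r + s) + (p * s + q * r) * (p + q) = p * s - q * r := by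
      linear_combination (H' 1 1 - H' 1 (-1)) / 2 - H' 0 1
    have h2 : r * s * (p + q) + (p * s + q * r) * (r + s) = p * s - q * r := by
      linear_combination (H' 1 1 + H' 1 (-1)) / 2 - H' 1 0
    clear H H'
    simp only [mul_eq_zero] at h10 h01
    simp only [Set.mem_insert_iff, Set.mem_singleton_iff, EmbeddingLike.apply_eq_iff_eq,
      vecCons_inj, and_true]
    -- Each row of `g` lies on one of the three lines, and the rows are independent.
    have key : (p = 1 ∧ q = 0 ∧ r = 0 ∧ s = 1) ∨ (p = 1 ∧ q = 0 ∧ r = 1 ∧ s = -1) ∨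
        (p = 0 ∧ q = -1 ∧ r = -1 ∧ s = 0) ∨ (p = 0 ∧ q = -1 ∧ r = 1 ∧ s = -1) ∨
        (p = -1 ∧ q = 1 ∧ r = 0 ∧ s = 1) ∨ (p = -1 ∧ q = 1 ∧ r = -1 ∧ s = 0) := by
      rcases h10 with (rfl | rfl) | hpq <;> rcases h01 with (rfl | rfl) | hrs <;> grind
    rcases key with ⟨rfl, rfl, rfl, rfl⟩ | ⟨rfl, rfl, rfl, rfl⟩ | ⟨rfl, rfl, rfl, rfl⟩ |
      ⟨rfl, rfl, rfl, rfl⟩ | ⟨rfl, rfl, rfl, rfl⟩ | ⟨rfl, rfl, rfl, rfl⟩ <;> simp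
  · intro hg
    simp only [Set.mem_insert_iff, Set.mem_singleton_iff] at hg
    rcases hg with rfl | rfl | rfl | rfl | rfl | rfl <;>
    · refine ⟨by simp [det_fin_two_of], fun v => ?_⟩
      simp [det_fin_two_of, modelCubic, vecMul, dotProduct, Fin.sum_univ_two]
      try ring

lemma ncard_stab_model : (twistedStab modelCubic).ncard = 6 := by
  have h2 : (1 : ℂ) ≠ -1 := by norm_num
  have h3 : (-1 : ℂ) ≠ 1 := by norm_num
  rw [stab_model]
  repeat rw [Set.ncard_insert_of_notMem (by simp [h2, h3]) (Set.toFinite _)]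
  simp

lemma exists_quadratic_factor (A B C : ℂ) :
    ∃ p q r s : ℂ, A = p * r ∧ B = p * s + q * r ∧ C = q * s := by
  by_cases hA : A = 0
  · exact ⟨0, 1, B, C, by simp [hA], by simp, by simp⟩
  · obtain ⟨e, he⟩ := IsAlgClosed.exists_pow_nat_eq (B ^ 2 - 4 * A * C) (n := 2) (by norm_num)
    refine ⟨A, (B + e) / 2, 1, (B - e) / (2 * A), by ring, by field_simp; ring, ?_⟩
    field_simp
    linear_combination he

lemma exists_cubic_factor (a b c d : ℂ) :
    ∃ p₁ q₁ p₂ q₂ p₃ q₃ : ℂ, a = p₁ * p₂ * p₃ ∧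
      3 * b = q₁ * p₂ * p₃ + p₁ * q₂ * p₃ + p₁ * p₂ * q₃ ∧
      3 * c = p₁ * q₂ * q₃ + q₁ * p₂ * q₃ + q₁ * q₂ * p₃ ∧ d = q₁ * q₂ * q₃ := by
  by_cases ha : a = 0
  · obtain ⟨p, q, r, s, h1, h2, h3⟩ := exists_quadratic_factor (3 * b) (3 * c) d
    exact ⟨0, 1, p, q, r, s, by simp [ha], by linear_combination h1,
      by linear_combination h2, by linear_combination h3⟩
  · open Polynomial in
    obtain ⟨t, ht⟩ := IsAlgClosed.exists_root
      (C a * X ^ 3 + C (3 * b) * X ^ 2 + C (3 * c) * X + C d) (by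
        rw [degree_cubic ha]; norm_num)
    have ht' : a * t ^ 3 + 3 * b * t ^ 2 + 3 * c * t + d = 0 := by
      simpa [Polynomial.IsRoot] using ht
    -- The quotient of `f` by `x - t y`.
    obtain ⟨p, q, r, s, h1, h2, h3⟩ := exists_quadratic_factor a (3 * b + a * t)
      (3 * c + 3 * b * t + a * t ^ 2)
    exact ⟨1, -t, p, q, r, s, by linear_combination h1, by linear_combination h2 - t * h1,
      by linear_combination h3 - t * h2, by linear_combination ht' - t * h3⟩

/-- A cubic form with nonzero discriminant is `P · (x y (x + y))`. If `f = L₁ L₂ L₃` and `[i j]`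
is the determinant of `Lᵢ, Lⱼ`, the columns of `P` are `[3 2] L₁` and `[1 3] L₂`, with sum
`[1 2] L₃` and `det P = [3 2] [1 3] [1 2]`. -/
lemma exists_equiv_model (a b c d : ℂ)
    (h : a ^ 2 * d ^ 2 - 6 * a * b * c * d - 3 * b ^ 2 * c ^ 2
        + 4 * a * c ^ 3 + 4 * b ^ 3 * d ≠ 0) :
    ∃ P : Matrix (Fin 2) (Fin 2) ℂ, P.det ≠ 0 ∧ ∀ v : Fin 2 → ℂ,
      a * v 0 ^ 3 + 3 * b * v 0 ^ 2 * v 1 + 3 * c * v 0 * v 1 ^ 2 + d * v 1 ^ 3 =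
        P.det⁻¹ * modelCubic (v ᵥ* P) := by
  obtain ⟨p₁, q₁, p₂, q₂, p₃, q₃, h1, h2, h3, h4⟩ := exists_cubic_factor a b c d
  obtain ⟨k, hk⟩ : ∃ k, k = (p₃ * q₂ - p₂ * q₃) * (p₁ * q₃ - p₃ * q₁) * (p₁ * q₂ - p₂ * q₁) :=
    ⟨_, rfl⟩
  have hb : b = (q₁ * p₂ * p₃ + p₁ * q₂ * p₃ + p₁ * p₂ * q₃) / 3 := by linear_combination h2 / 3
  have hc : c = (p₁ * q₂ * q₃ + q₁ * p₂ * q₃ + q₁ * q₂ * p₃) / 3 := by linear_combination h3 / 3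
  have hk0 : k ≠ 0 := by
    rintro rfl
    apply h
    rw [h1, hb, hc, h4]
    linear_combination
      ((p₃ * q₂ - p₂ * q₃) * (p₁ * q₃ - p₃ * q₁) * (p₁ * q₂ - p₂ * q₁)) / 27 * hk
  have hdet : (!![(p₃ * q₂ - p₂ * q₃) * p₁, (p₁ * q₃ - p₃ * q₁) * p₂;
      (p₃ * q₂ - p₂ * q₃) * q₁, (p₁ * q₃ - p₃ * q₁) * q₂]).det = k := by
    rw [det_fin_two_of, hk]; ring
  refine ⟨_, hdet ▸ hk0, fun v => ?_⟩
  rw [hdet, eq_inv_mul_iff_mul_eq₀ hk0, hk, h2, h3, h1, h4]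
  simp [modelCubic, vecMul, dotProduct, Fin.sum_univ_two]
  ring


/-- The stabilizer in `GL₂(ℂ)` of a binary cubic form `ax³ + 3bx²y + 3cxy² + dy³`
over `ℂ` with nonzero reduced discriminant has exactly 6 elements. -/
theorem stmt_8 (a b c d : ℂ)
    (h : a ^ 2 * d ^ 2 - 6 * a * b * c * d - 3 * b ^ 2 * c ^ 2
        + 4 * a * c ^ 3 + 4 * b ^ 3 * d ≠ 0) :
    {g : Matrix (Fin 2) (Fin 2) ℂ | g.det ≠ 0 ∧ ∀ x y : ℂ,
      (g.det)⁻¹ *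
        (a * (x * g 0 0 + y * g 1 0) ^ 3
          + 3 * b * (x * g 0 0 + y * g 1 0) ^ 2 * (x * g 0 1 + y * g 1 1)
          + 3 * c * (x * g 0 0 + y * g 1 0) * (x * g 0 1 + y * g 1 1) ^ 2
          + d * (x * g 0 1 + y * g 1 1) ^ 3)
        = a * x ^ 3 + 3 * b * x ^ 2 * y + 3 * c * x * y ^ 2 + d * y ^ 3}.ncard = 6 := by
 
  obtain ⟨P, hP, hf⟩ := exists_equiv_model a b c d h
  rw [← ncard_stab_model, ← ncard_twistedStab_conj hP hf]
  congr 1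
  ext g
  refine and_congr_right fun _ => ⟨fun H v => ?_, fun H x y => ?_⟩
  · simpa [vecMul, dotProduct, Fin.sum_univ_two] using H (v 0) (v 1)
  · simpa [vecMul, dotProduct, Fin.sum_univ_two] using H ![x, y]
end

section
/- Let F be a field of characteristic 0 and let Δ ∈ F×. Let f(x,y) = 3bx²y + 3cxy² + dy³ and f'(x,y) = 3b'x²y + 3c'xy² + d'y³ be binary cubic forms over F with zero x³-coefficient whose reduced discriminants both equal Δ. Then there exists a lower-triangular matrix g ∈ SL₂(F) with g·f = f'. That is, the group P(F) of lower-triangular matrices in SL₂(F) acts transitively on the set of binary cubic forms over F with zero x³-coefficient and reduced discriminant Δ. (Applied with F = K_𝔭 a completion of a number field K at any place 𝔭, this is the statement of the lemma.) -/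
/-!
For `g = !![t, 0; u, t⁻¹]`, the form `g · f` again has zero `x³`-coefficient, with `b`-coefficient
`b t` and `c`-coefficient `2 b u + c t⁻¹`. A nonzero discriminant forces `b, b' ≠ 0`, so `t` and `u`
can be chosen to match `b'` and `c'`. The discriminant is invariant and, for `b' ≠ 0`, determines
the `y³`-coefficient from the other two, so that coefficient matches as well.
-/

/-- Over a field `F` of characteristic 0, the group `P(F)` of lower-triangular
matrices in `SL₂(F)` acts transitively on binary cubic forms
`3bx²y + 3cxy² + dy³` with zero `x³`-coefficient and fixed nonzero reduced
discriminant `Δ = -3b²c² + 4b³d`. -/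
theorem stmt_9 {F : Type*} [Field F] [CharZero F] (Δ : F) (hΔ : Δ ≠ 0)
    (b c d b' c' d' : F)
    (hdisc : -3 * b ^ 2 * c ^ 2 + 4 * b ^ 3 * d = Δ)
    (hdisc' : -3 * b' ^ 2 * c' ^ 2 + 4 * b' ^ 3 * d' = Δ) :
    ∃ g : Matrix (Fin 2) (Fin 2) F, g.det = 1 ∧ g 0 1 = 0 ∧ ∀ x y : F,
      (g.det)⁻¹ *
        (3 * b * (x * g 0 0 + y * g 1 0) ^ 2 * (x * g 0 1 + y * g 1 1)
          + 3 * c * (x * g 0 0 + y * g 1 0) * (x * g 0 1 + y * g 1 1) ^ 2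
          + d * (x * g 0 1 + y * g 1 1) ^ 3)
        = 3 * b' * x ^ 2 * y + 3 * c' * x * y ^ 2 + d' * y ^ 3 := by
  have hb : b ≠ 0 := by
    rintro rfl
    exact hΔ (by rw [← hdisc]; ring)
  have hb' : b' ≠ 0 := by
    rintro rfl
    exact hΔ (by rw [← hdisc']; ring)
  obtain ⟨t, rfl⟩ : ∃ t, b' = b * t := ⟨b' / b, by field_simp⟩
  have ht : t ≠ 0 := right_ne_zero_of_mul hb'
  obtain ⟨u, rfl⟩ : ∃ u, c' = 2 * b * u + c * t⁻¹ :=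
    ⟨(c' - c * t⁻¹) / (2 * b), by field_simp; ring⟩
  have hd : d' = 3 * b * u ^ 2 * t⁻¹ + 3 * c * u * (t⁻¹) ^ 2 + d * (t⁻¹) ^ 3 := by
    have h4 : 4 * (b * t) ^ 3 ≠ 0 := mul_ne_zero (by norm_num) (pow_ne_zero 3 hb')
    apply mul_left_cancel₀ h4
    have h : 4 * (b * t) ^ 3 * d' = -3 * b ^ 2 * c ^ 2 + 4 * b ^ 3 * d
        + 3 * (b * t) ^ 2 * (2 * b * u + c * t⁻¹) ^ 2 := by
      linear_combination hdisc' - hdisc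
    rw [h]
    field_simp
    ring
  have hdet : (!![t, 0; u, t⁻¹] : Matrix (Fin 2) (Fin 2) F).det = 1 := by
    simp [Matrix.det_fin_two_of, ht]
  refine ⟨!![t, 0; u, t⁻¹], hdet, rfl, fun x y => ?_⟩
  rw [hdet, hd]
  simp only [Matrix.of_apply, Matrix.cons_val', Matrix.cons_val_zero, Matrix.cons_val_one,
    Matrix.cons_val_fin_one]
  field_simp
  ring
end

section
/- Let R be a Dedekind domain with fraction field K and let 𝔞 be a nonzero fractional ideal of R. Let f(x,y) = ax³ + 3bx²y + 3cxy² + dy³ with a ∈ 𝔞, b ∈ R, c ∈ 𝔞⁻¹, d ∈ 𝔞⁻², and let g = [[r,x],[y,s]] with r, s ∈ R, x ∈ 𝔞, y ∈ 𝔞⁻¹ and rs − xy ∈ R×. Then the form g·f, with (g·f)(x,y) = det(g)⁻¹·f((x,y)g), again has coefficients a' ∈ 𝔞, b' ∈ R, c' ∈ 𝔞⁻¹, d' ∈ 𝔞⁻²; moreover, if f is projective (i.e., (b² − ac)R + (ad − bc)𝔞 + (c² − bd)𝔞² = R as fractional ideals of R), then g·f is also projective. -/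
/-!
Membership is graded by powers of `𝔞`: `a, b, c, d` lie in `𝔞 ^ 1, 𝔞 ^ 0, 𝔞 ^ (-1), 𝔞 ^ (-2)`, and
`r, s, p, q` in `𝔞 ^ 0, 𝔞 ^ 0, 𝔞 ^ 1, 𝔞 ^ (-1)`, so every monomial occurring in a coefficient of
`g·f` has the right degree (`monomial_mem`), and `det g` is a unit of `R`.

For projectivity, put `H(x, y) = (b² - ac)x² + (bc - ad)xy + (c² - bd)y²`; the sign of the middle
coefficient is immaterial for the ideal. The twist by `det(g)⁻¹` makes this Hessian exactly
covariant: the Hessian of `g·f` at `(x, y)` is the Hessian of `f` at `(x, y)g`. The same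
grading shows that substituting a matrix with entries in `R, 𝔞, 𝔞⁻¹, R` can only shrink the ideal `A R + B 𝔞 + C 𝔞²` of a quadratic form
`A x² + B x y + C y²` (`quadIdeal_subst_le`). Since `g⁻¹` is a matrix of the same kind, the ideals
of the Hessians of `f` and `g·f` contain each other.
-/

open FractionalIdeal

section Graded

theorem add_mem_of_mem {R K : Type*} [CommRing R] [Field K] [Algebra R K]
    {I : FractionalIdeal (nonZeroDivisors R) K} {x y : K} (hx : x ∈ I) (hy : y ∈ I) : x + y ∈ I :=
  (I : Submodule R K).add_mem hx hy

variable {R K : Type*} [CommRing R] [IsDedekindDomain R] [Field K] [Algebra R K]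
  [IsFractionRing R K]

/-- The fractional ideal `A R + B 𝔞 + C 𝔞²` attached to the quadratic form
`A x² + B x y + C y²`. -/
noncomputable def quadIdeal (𝔞 : FractionalIdeal (nonZeroDivisors R) K) (A B C : K) :
    FractionalIdeal (nonZeroDivisors R) K :=
  spanSingleton (nonZeroDivisors R) A + spanSingleton (nonZeroDivisors R) B * 𝔞
    + spanSingleton (nonZeroDivisors R) C * 𝔞 ^ 2

theorem quadIdeal_mem {𝔞 : FractionalIdeal (nonZeroDivisors R) K} {A B C u v w : K}
    (hu : u ∈ 𝔞 ^ (0 : ℤ)) (hv : v ∈ 𝔞 ^ (1 : ℤ)) (hw : w ∈ 𝔞 ^ (2 : ℤ)) :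
    A * u + B * v + C * w ∈ quadIdeal 𝔞 A B C := by
  have hu' : A * u ∈ spanSingleton (nonZeroDivisors R) A := by
    rw [zpow_zero] at hu
    simpa using mul_mem_mul (mem_spanSingleton_self (nonZeroDivisors R) A) hu
  have hv' : B * v ∈ spanSingleton (nonZeroDivisors R) B * 𝔞 :=
    mul_mem_mul (mem_spanSingleton_self _ B) (by simpa using hv)
  have hw' : C * w ∈ spanSingleton (nonZeroDivisors R) C * 𝔞 ^ 2 :=
    mul_mem_mul (mem_spanSingleton_self _ C) (by exact_mod_cast hw)
  rw [quadIdeal, ← sup_eq_add, ← sup_eq_add]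
  have hle {I J : FractionalIdeal (nonZeroDivisors R) K} {x : K} (h : I ≤ J) (hx : x ∈ I) :
      x ∈ J := h hx
  exact add_mem_of_mem (hle le_sup_left (add_mem_of_mem (hle le_sup_left hu')
    (hle le_sup_right hv'))) (hle le_sup_right hw')

theorem pow_mem_zpow {𝔞 : FractionalIdeal (nonZeroDivisors R) K} {x : K} {m : ℤ}
    (hx : x ∈ 𝔞 ^ m) (n : ℕ) : x ^ n ∈ 𝔞 ^ (m * n) := by
  rw [zpow_mul, zpow_natCast]
  induction n with
  | zero => simp
  | succ n ih => rw [pow_succ, pow_succ]; exact mul_mem_mul ih hx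

/-- With `X` of degree `m`, `r` and `s` of degree `0`, `p` of degree `1` and `q` of degree `-1`
with respect to the powers of `𝔞`, a monomial in them has the expected degree. -/
theorem monomial_mem {𝔞 : FractionalIdeal (nonZeroDivisors R) K} (h𝔞 : 𝔞 ≠ 0) {r s p q X : K}
    (hr : r ∈ 𝔞 ^ (0 : ℤ)) (hs : s ∈ 𝔞 ^ (0 : ℤ)) (hp : p ∈ 𝔞 ^ (1 : ℤ)) (hq : q ∈ 𝔞 ^ (-1 : ℤ))
    {m t : ℤ} (hX : X ∈ 𝔞 ^ m) (n i j k l : ℕ) (ht : m + k - l = t) :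
    n * (X * r ^ i * s ^ j * p ^ k * q ^ l) ∈ 𝔞 ^ t := by
  have key := mul_mem_mul (mul_mem_mul (mul_mem_mul (mul_mem_mul hX (pow_mem_zpow hr i))
    (pow_mem_zpow hs j)) (pow_mem_zpow hp k)) (pow_mem_zpow hq l)
  simp only [← zpow_add₀ h𝔞] at key
  rw [show m + 0 * (i : ℤ) + 0 * j + 1 * k + -1 * l = t by rw [← ht]; ring] at key
  rw [← nsmul_eq_mul]
  exact (𝔞 ^ t).coeToSubmodule.nsmul_mem key n

/-- Substituting `(x, y) ↦ (x, y) [[r, p], [q, s]]` in a quadratic form does not enlarge its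
fractional ideal; the matrix need not be invertible. -/
theorem quadIdeal_subst_le {𝔞 : FractionalIdeal (nonZeroDivisors R) K} (h𝔞 : 𝔞 ≠ 0)
    {r s p q : K} (hr : r ∈ 𝔞 ^ (0 : ℤ)) (hs : s ∈ 𝔞 ^ (0 : ℤ)) (hp : p ∈ 𝔞 ^ (1 : ℤ))
    (hq : q ∈ 𝔞 ^ (-1 : ℤ)) (A B C : K) :
    quadIdeal 𝔞 (A * r ^ 2 + B * (r * p) + C * p ^ 2)
      (A * (2 * r * q) + B * (r * s + p * q) + C * (2 * p * s))
      (A * q ^ 2 + B * (q * s) + C * s ^ 2) ≤ quadIdeal 𝔞 A B C := by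
  have one_mem : (1 : K) ∈ 𝔞 ^ (0 : ℤ) := by
    simp
  have mono {X : K} {m t : ℤ} (hX : X ∈ 𝔞 ^ m) (n i j k l : ℕ) (ht : m + k - l = t) :=
    monomial_mem h𝔞 hr hs hp hq hX n i j k l ht
  conv_lhs => rw [quadIdeal]
  rw [← sup_eq_add, ← sup_eq_add]
  refine sup_le (sup_le ?_ ?_) ?_
  · rw [spanSingleton_le_iff_mem]
    convert quadIdeal_mem (A := A) (B := B) (C := C) (mono one_mem 1 2 0 0 0 (by simp))
      (mono one_mem 1 1 0 1 0 (by simp)) (mono one_mem 1 0 0 2 0 (by simp)) using 1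
    push_cast; ring
  · rw [spanSingleton_mul_le_iff]
    intro z hz
    rw [← zpow_one 𝔞] at hz
    convert quadIdeal_mem (A := A) (B := B) (C := C) (mono hz 2 1 0 0 1 (by simp))
      (add_mem_of_mem (mono hz 1 1 1 0 0 (by simp)) (mono hz 1 0 0 1 1 (by simp)))
      (mono hz 2 0 1 1 0 (by simp)) using 1
    push_cast; ring
  · rw [spanSingleton_mul_le_iff]
    intro z hz
    rw [← zpow_natCast] at hz
    convert quadIdeal_mem (A := A) (B := B) (C := C) (mono hz 1 0 0 0 2 (by simp))
      (mono hz 1 0 1 0 1 (by simp)) (mono hz 1 0 2 0 0 (by simp)) using 1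
    push_cast; ring

end Graded

/-- The action of `GL(R ⊕ 𝔞)` preserves the lattice `V_𝔞` of binary cubic forms
`ax³ + 3bx²y + 3cxy² + dy³` (with `a ∈ 𝔞`, `b ∈ R`, `c ∈ 𝔞⁻¹`, `d ∈ 𝔞⁻²`) and
preserves projectivity.  Here `g = [[r,p],[q,s]]` with `r, s ∈ R`, `p ∈ 𝔞`,
`q ∈ 𝔞⁻¹`, `rs - pq ∈ Rˣ`, and `a', b', c', d'` are the coefficients of
`g·f`, where `(g·f)(x,y) = det(g)⁻¹ · f((x,y)g)`. -/
theorem stmt_10 {R K : Type*} [CommRing R] [IsDedekindDomain R] [Field K] [Algebra R K]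
    [IsFractionRing R K] (𝔞 : FractionalIdeal (nonZeroDivisors R) K) (h𝔞 : 𝔞 ≠ 0)
    (a b c d : K) (ha : a ∈ 𝔞) (hb : b ∈ (1 : FractionalIdeal (nonZeroDivisors R) K))
    (hc : c ∈ 𝔞⁻¹) (hd : d ∈ 𝔞⁻¹ * 𝔞⁻¹)
    (r s p q : K)
    (hr : r ∈ (1 : FractionalIdeal (nonZeroDivisors R) K))
    (hs : s ∈ (1 : FractionalIdeal (nonZeroDivisors R) K))
    (hp : p ∈ 𝔞) (hq : q ∈ 𝔞⁻¹)
    (hdet : ∃ w : Rˣ, algebraMap R K w = r * s - p * q)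
    (a' b' c' d' : K)
    (ha' : a' = (r * s - p * q)⁻¹ *
      (a * r ^ 3 + 3 * b * r ^ 2 * p + 3 * c * r * p ^ 2 + d * p ^ 3))
    (hb' : b' = (r * s - p * q)⁻¹ *
      (a * r ^ 2 * q + b * (r ^ 2 * s + 2 * r * p * q)
        + c * (2 * r * p * s + p ^ 2 * q) + d * p ^ 2 * s))
    (hc' : c' = (r * s - p * q)⁻¹ *
      (a * r * q ^ 2 + b * (2 * r * q * s + p * q ^ 2)
        + c * (r * s ^ 2 + 2 * p * q * s) + d * p * s ^ 2))
    (hd' : d' = (r * s - p * q)⁻¹ *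
      (a * q ^ 3 + 3 * b * q ^ 2 * s + 3 * c * q * s ^ 2 + d * s ^ 3)) :
    a' ∈ 𝔞 ∧ b' ∈ (1 : FractionalIdeal (nonZeroDivisors R) K) ∧ c' ∈ 𝔞⁻¹ ∧
    d' ∈ 𝔞⁻¹ * 𝔞⁻¹ ∧
    (spanSingleton (nonZeroDivisors R) (b ^ 2 - a * c)
        + spanSingleton (nonZeroDivisors R) (a * d - b * c) * 𝔞
        + spanSingleton (nonZeroDivisors R) (c ^ 2 - b * d) * 𝔞 ^ 2 = 1 →
      spanSingleton (nonZeroDivisors R) (b' ^ 2 - a' * c')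
        + spanSingleton (nonZeroDivisors R) (a' * d' - b' * c') * 𝔞
        + spanSingleton (nonZeroDivisors R) (c' ^ 2 - b' * d') * 𝔞 ^ 2 = 1) := by
  have hb0 : b ∈ 𝔞 ^ (0 : ℤ) := by rwa [zpow_zero]
  have hr0 : r ∈ 𝔞 ^ (0 : ℤ) := by rwa [zpow_zero]
  have hs0 : s ∈ 𝔞 ^ (0 : ℤ) := by rwa [zpow_zero]
  have ha1 : a ∈ 𝔞 ^ (1 : ℤ) := by rwa [zpow_one]
  have hp1 : p ∈ 𝔞 ^ (1 : ℤ) := by rwa [zpow_one]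
  have hc1 : c ∈ 𝔞 ^ (-1 : ℤ) := by rwa [zpow_neg_one]
  have hq1 : q ∈ 𝔞 ^ (-1 : ℤ) := by rwa [zpow_neg_one]
  have e2 : 𝔞 ^ (-2 : ℤ) = 𝔞⁻¹ * 𝔞⁻¹ := by
    rw [← zpow_neg_one, ← zpow_add₀ h𝔞]; norm_num
  have hd2 : d ∈ 𝔞 ^ (-2 : ℤ) := by rwa [e2]
  obtain ⟨w, hw⟩ := hdet
  have hD : r * s - p * q ≠ 0 := by
    rw [← hw]
    exact (w.isUnit.map (algebraMap R K)).ne_zero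
  have hinv : (r * s - p * q)⁻¹ = algebraMap R K (↑w⁻¹ : R) := by
    rw [← hw]
    exact (eq_inv_of_mul_eq_one_left (by rw [← map_mul]; simp)).symm
  have scale {m : ℤ} {x : K} (hx : x ∈ 𝔞 ^ m) : (r * s - p * q)⁻¹ * x ∈ 𝔞 ^ m := by
    rw [hinv, ← Algebra.smul_def]
    exact (𝔞 ^ m).coeToSubmodule.smul_mem _ hx
  have mono {X : K} {m t : ℤ} (hX : X ∈ 𝔞 ^ m) (n i j k l : ℕ) (ht : m + k - l = t) :=
    monomial_mem h𝔞 hr0 hs0 hp1 hq1 hX n i j k l ht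
  refine ⟨?_, ?_, ?_, ?_, ?_⟩
  · rw [ha', ← zpow_one 𝔞]
    refine scale ?_
    convert add_mem_of_mem (add_mem_of_mem (add_mem_of_mem
      (mono ha1 1 3 0 0 0 (t := 1) (by simp)) (mono hb0 3 2 0 1 0 (by simp)))
      (mono hc1 3 1 0 2 0 (by simp))) (mono hd2 1 0 0 3 0 (by simp)) using 1
    push_cast; ring
  · rw [hb', ← zpow_zero 𝔞]
    refine scale ?_
    convert add_mem_of_mem (add_mem_of_mem (add_mem_of_mem (mono ha1 1 2 0 0 1 (t := 0) (by simp))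
      (add_mem_of_mem (mono hb0 1 2 1 0 0 (by simp)) (mono hb0 2 1 0 1 1 (by simp))))
      (add_mem_of_mem (mono hc1 2 1 1 1 0 (by simp)) (mono hc1 1 0 0 2 1 (by simp))))
      (mono hd2 1 0 1 2 0 (by simp)) using 1
    push_cast; ring
  · rw [hc', ← zpow_neg_one 𝔞]
    refine scale ?_
    convert add_mem_of_mem (add_mem_of_mem (add_mem_of_mem (mono ha1 1 1 0 0 2 (t := -1) (by simp))
      (add_mem_of_mem (mono hb0 2 1 1 0 1 (by simp)) (mono hb0 1 0 0 1 2 (by simp))))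
      (add_mem_of_mem (mono hc1 1 1 2 0 0 (by simp)) (mono hc1 2 0 1 1 1 (by simp))))
      (mono hd2 1 0 2 1 0 (by simp)) using 1
    push_cast; ring
  · rw [hd', ← e2]
    refine scale ?_
    convert add_mem_of_mem (add_mem_of_mem (add_mem_of_mem
      (mono ha1 1 0 0 0 3 (t := -2) (by simp)) (mono hb0 3 0 1 0 2 (by simp)))
      (mono hc1 3 0 2 0 1 (by simp))) (mono hd2 1 0 3 0 0 (by simp)) using 1
    push_cast; ring
  · intro hproj
    change quadIdeal 𝔞 _ _ _ = 1 at hproj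
    change quadIdeal 𝔞 _ _ _ = 1
    -- The covariant quadratic form is the one with middle coefficient `b * c - a * d`; for
    -- `a * d - b * c` the substitution is `g` conjugated by `diag(1, -1)`, that is, with `p` and
    -- `q` negated.
    have hA : b' ^ 2 - a' * c' = (b ^ 2 - a * c) * r ^ 2 + (a * d - b * c) * (r * -p)
        + (c ^ 2 - b * d) * (-p) ^ 2 := by
      rw [ha', hb', hc']; field_simp; ring
    have hB : a' * d' - b' * c' = (b ^ 2 - a * c) * (2 * r * -q)
        + (a * d - b * c) * (r * s + -p * -q) + (c ^ 2 - b * d) * (2 * -p * s) := by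
      rw [ha', hb', hc', hd']; field_simp; ring
    have hC : c' ^ 2 - b' * d' = (b ^ 2 - a * c) * (-q) ^ 2 + (a * d - b * c) * (-q * s)
        + (c ^ 2 - b * d) * s ^ 2 := by
      rw [hb', hc', hd']; field_simp; ring
    have neg {m : ℤ} {x : K} (hx : x ∈ 𝔞 ^ m) : -x ∈ 𝔞 ^ m :=
      (𝔞 ^ m).coeToSubmodule.neg_mem hx
    rw [← hproj]
    refine le_antisymm ?_ ?_
    · rw [hA, hB, hC]
      exact quadIdeal_subst_le h𝔞 hr0 hs0 (neg hp1) (neg hq1) _ _ _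
    · -- The inverse of `[[r, -p], [-q, s]]` is `det(g)⁻¹ [[s, p], [q, r]]`.
      have h := quadIdeal_subst_le h𝔞 (scale hs0) (scale hr0) (scale hp1) (scale hq1)
        (b' ^ 2 - a' * c') (a' * d' - b' * c') (c' ^ 2 - b' * d')
      convert h using 2
      all_goals rw [hA, hB, hC]; field_simp; ring
end

section
/- Let F be a finite field. Then the number of quadruples (a, b, c, d) ∈ F⁴ satisfying b² = ac, ad = bc and c² = bd is exactly |F|². (Equivalently, the number of binary cubic forms ax³ + 3bx²y + 3cxy² + dy³ over F whose Hessian covariant (b² − ac)x² + (ad − bc)xy + (c² − bd)y² vanishes identically is |F|², so the density of non-projective forms modulo a prime 𝔭 of a Dedekind domain with residue field of size N(𝔭) is N(𝔭)⁻².) -/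
/-! A quadruple with vanishing Hessian is determined by `a` and one further free parameter.
If `a ≠ 0`, then `b` is arbitrary and `c = b² / a`, `d = b³ / a²` are forced, the third
equation being then automatic. If `a = 0`, then `b² = 0` and `c² = bd` force `b = c = 0`,
and `d` is arbitrary. So the solution set is the injective image of `F × F` under
`hessianZero`. -/

open Classical in
/-- The parametrization of the zeros of the Hessian by `F × F`: the first coordinate is `a`,
the second is `b` when `a ≠ 0` and `d` when `a = 0`. -/
noncomputable def hessianZero {F : Type*} [Field F] (p : F × F) : F × F × F × F :=
  if p.1 = 0 then (0, 0, 0, p.2) else (p.1, p.2, p.2 ^ 2 / p.1, p.2 ^ 3 / p.1 ^ 2)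

lemma hessianZero_injective {F : Type*} [Field F] :
    Function.Injective (hessianZero (F := F)) := by
  rintro ⟨s, t⟩ ⟨s', t'⟩ h
  by_cases hs : s = 0 <;> by_cases hs' : s' = 0 <;>
    simp_all [hessianZero]

lemma range_hessianZero {F : Type*} [Field F] :
    Set.range (hessianZero (F := F)) =
      {v : F × F × F × F | v.2.1 ^ 2 = v.1 * v.2.2.1 ∧
        v.1 * v.2.2.2 = v.2.1 * v.2.2.1 ∧
        v.2.2.1 ^ 2 = v.2.1 * v.2.2.2} := by
  ext ⟨a, b, c, d⟩
  simp only [Set.mem_range, Set.mem_ofPred_eq]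
  constructor
  · rintro ⟨⟨s, t⟩, h⟩
    by_cases hs : s = 0
    · simp only [hessianZero, hs, if_true, Prod.mk.injEq] at h
      obtain ⟨rfl, rfl, rfl, rfl⟩ := h
      simp
    · simp only [hessianZero, hs, if_false, Prod.mk.injEq] at h
      obtain ⟨rfl, rfl, rfl, rfl⟩ := h
      refine ⟨?_, ?_, ?_⟩ <;> field_simp
  · rintro ⟨h1, h2, h3⟩
    by_cases ha : a = 0
    · subst ha
      obtain rfl : b = 0 := by simpa using h1
      obtain rfl : c = 0 := by simpa using h3
      exact ⟨(0, d), by simp [hessianZero]⟩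
    · refine ⟨(a, b), ?_⟩
      simp only [hessianZero, ha, if_false, Prod.mk.injEq, true_and]
      constructor
      · field_simp
        linear_combination h1
      · field_simp
        linear_combination b * h1 - a * h2

/-- Over a finite field `F`, the number of binary cubic forms
`ax³ + 3bx²y + 3cxy² + dy³` whose Hessian covariant vanishes identically, i.e. the
number of quadruples `(a,b,c,d) ∈ F⁴` with `b² = ac`, `ad = bc` and `c² = bd`,
is exactly `|F|²`. -/
theorem stmt_12 {F : Type*} [Field F] [Fintype F] :
    {v : F × F × F × F | v.2.1 ^ 2 = v.1 * v.2.2.1 ∧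
      v.1 * v.2.2.2 = v.2.1 * v.2.2.1 ∧
      v.2.2.1 ^ 2 = v.2.1 * v.2.2.2}.ncard = Fintype.card F ^ 2 := by
  rw [← range_hessianZero, ← Set.image_univ,
    Set.ncard_image_of_injective _ hessianZero_injective, Set.ncard_univ,
    Nat.card_eq_fintype_card, Fintype.card_prod, sq]
end

section
/- Let K be a number field with ring of integers R = 𝒪_K, let L be a quadratic field extension of K, and let S be an order in L, i.e., an R-subalgebra of L that is finitely generated as an R-module and spans L over K. Let S×_{N=1} = {u ∈ S× : N_{L/K}(u) = 1} denote the subgroup of units of S of norm 1, where N_{L/K} is the field norm. Then the quotients S×/S×³, S×_{N=1}/(S×_{N=1})³ and R×/R×³ (each group modulo its subgroup of cubes) are finite, and |S×_{N=1}/(S×_{N=1})³| · |R×/R×³| = |S×/S×³|. -/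
/-!
Write `i : Rˣ → Sˣ` for the inclusion and `N : Sˣ → Rˣ` for the relative norm, so that
`N (i r) = r ^ 2` because `[L : K] = 2`. As `2` is invertible modulo `3`, the sequence
`ker N → Sˣ → Rˣ` splits after passing to the quotients by cubes: multiplication
`(u, r) ↦ u * i r` induces a bijection `ker N / cubes × Rˣ / cubes ≃ Sˣ / cubes`. The key device
is the homomorphism `s ↦ s ^ 4 * i (N s) ^ (-2)` from `Sˣ` to `ker N`, which on `ker N` is the
fourth power, hence the identity modulo cubes. This is purely group theoretic
(`natCard_modCubes_mul`).

Finiteness comes from Dirichlet's unit theorem: every element of `S` is integral, so `Sˣ` and its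
subgroups embed in the finitely generated abelian group `(𝓞 L)ˣ`, and a finitely generated abelian
group of exponent dividing `3` is finite.
-/

open NumberField

/-- The quotient of a commutative group by its subgroup of cubes. -/
def modCubes (G : Type*) [CommGroup G] : Type _ :=
  G ⧸ (powMonoidHom 3 : G →* G).range

/-- The subgroup of units of an order `S` in `L/K` of relative norm 1. -/
noncomputable def normOneUnits {K L : Type*} [Field K] [Field L] [Algebra K L]
    {R : Type*} [CommRing R] [Algebra R L] (S : Subalgebra R L) : Subgroup (↥S)ˣ :=
  ((Units.map (Algebra.norm K : L →* K)).comp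
    (Units.map (S.val.toRingHom.toMonoidHom))).ker

/-- A group embedding in a finitely generated abelian group has finitely many classes modulo
cubes. -/
theorem finite_modCubes_of_injective {G H : Type*} [CommGroup G] [CommGroup H]
    [Module.Finite ℤ (Additive H)] (f : G →* H) (hf : Function.Injective f) :
    Finite (modCubes G) := by
  have hG : Module.Finite ℤ (Additive G) :=
    Module.Finite.of_injective (MonoidHom.toAdditive f).toIntLinearMap hf
  have : Group.FG G := GroupFG.iff_add_fg.mpr (Module.Finite.iff_addGroup_fg.mp hG)
  refine CommGroup.finite_of_fg_isMulTorsion (G ⧸ (powMonoidHom 3 : G →* G).range) ?_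
  intro x
  induction x using QuotientGroup.induction_on with
  | H g =>
    refine isOfFinOrder_iff_pow_eq_one.mpr ⟨3, by norm_num, ?_⟩
    rw [← QuotientGroup.mk_pow, QuotientGroup.eq_one_iff]
    exact ⟨g, rfl⟩

/-- If `N : B → A` and `i : A → B` are homomorphisms of abelian groups whose composite on `A` is
squaring, then `B` modulo cubes is the product of `ker N` and `A` modulo cubes. -/
theorem natCard_modCubes_mul {A B : Type*} [CommGroup A] [CommGroup B]
    (i : A →* B) (N : B →* A) (h : ∀ a, N (i a) = a ^ 2) :
    Nat.card (modCubes N.ker) * Nat.card (modCubes A) = Nat.card (modCubes B) := by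
  let f₁ : N.ker ⧸ (powMonoidHom 3 : N.ker →* N.ker).range →*
      B ⧸ (powMonoidHom 3 : B →* B).range :=
    QuotientGroup.map _ _ N.ker.subtype (by rintro _ ⟨x, rfl⟩; exact ⟨x, rfl⟩)
  let f₂ : A ⧸ (powMonoidHom 3 : A →* A).range →* B ⧸ (powMonoidHom 3 : B →* B).range :=
    QuotientGroup.map _ _ i (by rintro _ ⟨x, rfl⟩; exact ⟨i x, by simp⟩)
  let f := f₁.coprod f₂
  have hinj : Function.Injective f := by
    rw [injective_iff_map_eq_one]
    rintro ⟨u, a⟩ hua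
    induction u using QuotientGroup.induction_on with
    | H u =>
    induction a using QuotientGroup.induction_on with
    | H a =>
    have hua' : (((u : B) * i a : B) : B ⧸ (powMonoidHom 3 : B →* B).range) = 1 := hua
    obtain ⟨t, ht⟩ := (QuotientGroup.eq_one_iff _).mp hua'
    replace ht : t ^ 3 = u * i a := ht
    have hu : N u = 1 := u.2
    have hN : N t ^ 3 = a ^ 2 := by rw [← map_pow, ht, map_mul, hu, h, one_mul]
    -- `a = a ^ 3 / a ^ 2` is a cube, hence so is `u`.
    have ha : (a / N t) ^ 3 = a := by rw [div_pow, hN, pow_succ, mul_div_cancel_left]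
    have hw : (t / i (a / N t)) ^ 3 = u := by
      rw [div_pow, ht, ← map_pow, ha, mul_div_cancel_right]
    set w := t / i (a / N t)
    have hNw : N w ^ 3 = 1 := by rw [← map_pow, hw, hu]
    -- The cube root `w` of `u` need not have norm 1. The element `w ^ 4 * i (N w) ^ (-2)` does, and
    -- its cube is `u ^ 4`; dividing it by `u = w ^ 3` gives a cube root of `u` inside `ker N`.
    have hv : w ^ 4 * (i (N w) ^ 2)⁻¹ * (w ^ 3)⁻¹ ∈ N.ker := by
      rw [MonoidHom.mem_ker]
      simp only [map_mul, map_inv, map_pow, h, hNw]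
      simp [← pow_mul]
    have hiw : i (N w) ^ 3 = 1 := by rw [← map_pow, hNw, map_one]
    have h1 : ((u : N.ker) : N.ker ⧸ (powMonoidHom 3 : N.ker →* N.ker).range) = 1 := by
      refine (QuotientGroup.eq_one_iff _).mpr ⟨⟨_, hv⟩, Subtype.ext ?_⟩
      change (w ^ 4 * (i (N w) ^ 2)⁻¹ * (w ^ 3)⁻¹) ^ 3 = (u : B)
      have e : (w ^ 4 * (i (N w) ^ 2)⁻¹ * (w ^ 3)⁻¹) ^ 3 = w ^ 3 * ((i (N w) ^ 3) ^ 2)⁻¹ := by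
        simp only [mul_pow, inv_pow, ← pow_mul]
        rw [mul_right_comm, ← div_eq_mul_inv (w ^ _), div_eq_iff_eq_mul.mpr]
        rw [← pow_add]
      rw [e, hiw, one_pow, inv_one, mul_one, hw]
    have h2 : ((a : A) : A ⧸ (powMonoidHom 3 : A →* A).range) = 1 :=
      (QuotientGroup.eq_one_iff _).mpr ⟨_, ha⟩
    exact Prod.ext h1 h2
  have hsurj : Function.Surjective f := by
    intro b
    induction b using QuotientGroup.induction_on with
    | H s =>
    -- `s ≡ s ^ 4 = (s ^ 4 * i (N s) ^ (-2)) * i (N s ^ 2)` modulo cubes.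
    have hv : s ^ 4 * (i (N s) ^ 2)⁻¹ ∈ N.ker := by
      rw [MonoidHom.mem_ker]
      simp only [map_mul, map_inv, map_pow, h]
      simp [← pow_mul]
    refine ⟨(((⟨_, hv⟩ : N.ker) : _ ⧸ _), ((N s ^ 2 : A) : _ ⧸ _)), ?_⟩
    change (((s ^ 4 * (i (N s) ^ 2)⁻¹) * i (N s ^ 2) : B) :
      B ⧸ (powMonoidHom 3 : B →* B).range) = s
    rw [map_pow, inv_mul_cancel_right]
    have hs : s⁻¹ * s ^ 4 ∈ (powMonoidHom 3 : B →* B).range :=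
      ⟨s, by rw [pow_succ' s 3, inv_mul_cancel_left]; rfl⟩
    exact (QuotientGroup.eq.mpr hs).symm
  unfold modCubes
  rw [← Nat.card_prod]
  exact Nat.card_congr (Equiv.ofBijective f ⟨hinj, hsurj⟩)

/-- For an order `S` in a quadratic extension `L` of a number field `K` with ring of
integers `R = 𝓞 K`, the groups `S^×/(S^×)³`, `S^×_{N=1}/(S^×_{N=1})³` and
`R^×/(R^×)³` are finite and
`|S^×_{N=1}/(S^×_{N=1})³| · |R^×/(R^×)³| = |S^×/(S^×)³|`. -/
theorem stmt_14 {K L : Type*} [Field K] [NumberField K] [Field L] [Algebra K L]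
    [FiniteDimensional K L] (hdeg : Module.finrank K L = 2)
    [Algebra (RingOfIntegers K) L] [IsScalarTower (RingOfIntegers K) K L]
    (S : Subalgebra (RingOfIntegers K) L) (hfin : Module.Finite (RingOfIntegers K) S)
    (hspan : Submodule.span K (S : Set L) = ⊤) :
    Finite (modCubes (↥S)ˣ) ∧
    Finite (modCubes (↥(normOneUnits (K := K) S))) ∧
    Finite (modCubes (RingOfIntegers K)ˣ) ∧
    Nat.card (modCubes (↥(normOneUnits (K := K) S))) *
        Nat.card (modCubes (RingOfIntegers K)ˣ) =
      Nat.card (modCubes (↥S)ˣ) := by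
  have : NumberField L := NumberField.of_module_finite K L
  have hint : ∀ x : S, IsIntegral ℤ (S.val x) := fun x =>
    isIntegral_trans (A := RingOfIntegers K) _
      ((Algebra.IsIntegral.isIntegral (R := RingOfIntegers K) x).map S.val)
  let j : (↥S)ˣ →* (RingOfIntegers L)ˣ :=
    Units.map (RingOfIntegers.restrict_monoidHom (S.val : S →* L) hint)
  have hj : Function.Injective j := by
    refine Units.map_injective fun x y hxy => Subtype.ext ?_
    exact congrArg (fun z : RingOfIntegers L => (z : L)) hxy
  let N : (↥S)ˣ →* (RingOfIntegers K)ˣ := (Units.map (RingOfIntegers.norm K)).comp j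
  let i : (RingOfIntegers K)ˣ →* (↥S)ˣ :=
    Units.map (algebraMap (RingOfIntegers K) S : RingOfIntegers K →* S)
  have hNval : ∀ u : (↥S)ˣ, (((N u : RingOfIntegers K)) : K) = Algebra.norm K ((u : S) : L) :=
    fun u => rfl
  have hN : ∀ a, N (i a) = a ^ 2 := by
    intro a
    ext
    rw [hNval]
    change Algebra.norm K (algebraMap (RingOfIntegers K) L a) = _
    rw [IsScalarTower.algebraMap_apply (RingOfIntegers K) K L, Algebra.norm_algebraMap, hdeg]
    simp
  have hker : normOneUnits (K := K) S = N.ker := by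
    ext u
    rw [MonoidHom.mem_ker, normOneUnits, MonoidHom.mem_ker, Units.ext_iff, Units.ext_iff,
      RingOfIntegers.ext_iff, hNval]
    rfl
  refine ⟨finite_modCubes_of_injective j hj,
    finite_modCubes_of_injective (j.comp (normOneUnits (K := K) S).subtype)
      (hj.comp Subtype.val_injective),
    finite_modCubes_of_injective (MonoidHom.id _) Function.injective_id, ?_⟩
  rw [hker]
  exact natCard_modCubes_mul i N hN
end

section
/- Let R be a Dedekind domain with fraction field K, let V be a finite-dimensional K-vector space, and let M and N be finitely generated R-submodules of V each spanning V over K. Then there exists a K-linear automorphism φ of V and a finite set T of nonzero prime ideals of R such that for every nonzero prime ideal 𝔭 ∉ T of R, the localization of φ(M) at 𝔭 equals the localization of N at 𝔭 (as R_(𝔭)-submodules of V, where R_(𝔭) is the localization of R at 𝔭). In particular, the module index [M : N]_R, defined prime-by-prime as det of a local isomorphism, is the unit ideal at all but finitely many primes, so it is a nonzero fractional ideal of R. -/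
/-!
The automorphism can be taken to be the identity. Since `N` spans `V` over `K`, clearing
denominators shows that every vector of `V` has a nonzero `R`-multiple in `N`; as `M` is finitely
generated, a single nonzero `a` satisfies `a M ⊆ N`, and symmetrically `b N ⊆ M` for some nonzero
`b`. Away from the finitely many primes dividing `a b`, both `a` and `b` are invertible, so the
two localizations coincide.
-/

theorem exists_smul_mem_of_span_eq_top {R K V : Type*} [CommRing R] [IsDomain R] [Field K]
    [Algebra R K] [IsFractionRing R K] [AddCommGroup V] [Module K V] [Module R V]
    [IsScalarTower R K V] (N : Submodule R V)
    (hN : Submodule.span K (N : Set V) = ⊤) (v : V) :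
    ∃ d : R, d ≠ 0 ∧ d • v ∈ N := by
  have hv : v ∈ Submodule.span K (N : Set V) := hN ▸ Submodule.mem_top
  induction hv using Submodule.span_induction with
  | mem x hx => exact ⟨1, one_ne_zero, by simpa using hx⟩
  | zero => exact ⟨1, one_ne_zero, by simp⟩
  | add x y _ _ hx hy =>
    obtain ⟨a, ha, hax⟩ := hx
    obtain ⟨b, hb, hby⟩ := hy
    refine ⟨a * b, mul_ne_zero ha hb, ?_⟩
    rw [smul_add]
    refine N.add_mem ?_ ?_
    · rw [mul_comm, mul_smul]
      exact N.smul_mem _ hax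
    · rw [mul_smul]
      exact N.smul_mem _ hby
  | smul k x _ hx =>
    obtain ⟨a, ha, hax⟩ := hx
    obtain ⟨r, s, hs, rfl⟩ := IsFractionRing.div_surjective (A := R) k
    have hs0 : s ≠ 0 := nonZeroDivisors.ne_zero hs
    have hsK : algebraMap R K s ≠ 0 := by
      simpa using hs0
    refine ⟨a * s, mul_ne_zero ha hs0, ?_⟩
    have key : (a * s) • (algebraMap R K r / algebraMap R K s) • x = r • a • x := by
      rw [← algebraMap_smul K (a * s), ← algebraMap_smul K r, ← algebraMap_smul K a,
        smul_smul, smul_smul, map_mul]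
      congr 1
      field_simp
    rw [key]
    exact N.smul_mem _ hax

theorem exists_smul_le_of_fg {R K V : Type*} [CommRing R] [IsDomain R] [Field K]
    [Algebra R K] [IsFractionRing R K] [AddCommGroup V] [Module K V] [Module R V]
    [IsScalarTower R K V] (M N : Submodule R V) (hM : M.FG)
    (hN : Submodule.span K (N : Set V) = ⊤) :
    ∃ d : R, d ≠ 0 ∧ ∀ m ∈ M, d • m ∈ N := by
  induction M, hM using Submodule.fg_induction with
  | singleton x =>
    obtain ⟨d, hd, hdx⟩ := exists_smul_mem_of_span_eq_top N hN x
    refine ⟨d, hd, fun m hm => ?_⟩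
    obtain ⟨r, rfl⟩ := Submodule.mem_span_singleton.1 hm
    rw [smul_comm]
    exact N.smul_mem _ hdx
  | sup M₁ M₂ _ _ h₁ h₂ =>
    obtain ⟨a, ha, h₁⟩ := h₁
    obtain ⟨b, hb, h₂⟩ := h₂
    refine ⟨a * b, mul_ne_zero ha hb, fun m hm => ?_⟩
    obtain ⟨y, hy, z, hz, rfl⟩ := Submodule.mem_sup.1 hm
    rw [smul_add]
    refine N.add_mem ?_ ?_
    · rw [mul_comm, mul_smul]
      exact N.smul_mem _ (h₁ y hy)
    · rw [mul_smul]
      exact N.smul_mem _ (h₂ z hz)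


/-- For two full lattices `M, N` over a Dedekind domain `R` in a finite-dimensional
`K`-vector space `V`, there is a `K`-linear automorphism `φ` of `V` and a finite set
`T` of primes such that the localizations of `φ(M)` and `N` at every nonzero prime
`𝔭 ∉ T` agree (so the module index `[M : N]_R` is the unit ideal at all but finitely
many primes, hence a nonzero fractional ideal). -/
theorem stmt_17 {R K V : Type*} [CommRing R] [IsDedekindDomain R] [Field K]
    [Algebra R K] [IsFractionRing R K] [AddCommGroup V] [Module K V] [Module R V]
    [IsScalarTower R K V] [FiniteDimensional K V]
    (M N : Submodule R V) (hMfg : M.FG) (hNfg : N.FG)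
    (hMspan : Submodule.span K (M : Set V) = ⊤)
    (hNspan : Submodule.span K (N : Set V) = ⊤) :
    ∃ (φ : V ≃ₗ[K] V) (T : Finset (Ideal R)),
      ∀ P : Ideal R, P.IsPrime → P ≠ ⊥ → P ∉ T →
        {v : V | ∃ s : R, s ∉ P ∧
            s • v ∈ M.map (LinearMap.restrictScalars R φ.toLinearMap)} =
        {v : V | ∃ s : R, s ∉ P ∧ s • v ∈ N} := by
  obtain ⟨a, ha, haM⟩ := exists_smul_le_of_fg M N hMfg hNspan
  obtain ⟨b, hb, hbN⟩ := exists_smul_le_of_fg N M hNfg hMspan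
  have hab : Ideal.span {a * b} ≠ 0 := by
    simpa [Ideal.span_singleton_eq_bot] using And.intro ha hb
  have hfin := (Ideal.finite_factors hab).image IsDedekindDomain.HeightOneSpectrum.asIdeal
  refine ⟨LinearEquiv.refl K V, hfin.toFinset, fun P hP hP0 hPT => ?_⟩
  have hmem : a * b ∉ P := fun h => hPT <| by
    rw [Set.Finite.mem_toFinset]
    exact ⟨⟨P, hP, hP0⟩, Ideal.dvd_span_singleton.2 h, rfl⟩
  have haP : a ∉ P := fun h => hmem (P.mul_mem_right b h)
  have hbP : b ∉ P := fun h => hmem (P.mul_mem_left a h)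
  have hmap : M.map (LinearMap.restrictScalars R (LinearEquiv.refl K V).toLinearMap) = M :=
    Submodule.map_id M
  rw [hmap]
  ext v
  constructor
  · rintro ⟨s, hs, hsv⟩
    exact ⟨a * s, hP.mul_notMem haP hs, by rw [mul_smul]; exact haM _ hsv⟩
  · rintro ⟨s, hs, hsv⟩
    exact ⟨b * s, hP.mul_notMem hbP hs, by rw [mul_smul]; exact hbN _ hsv⟩
end

section
/- Let R be a Dedekind domain that is not a field, and let S be an R-algebra that is finitely generated and torsion-free as an R-module. Let I be an ideal of S with I ≠ S. Then there exists a nonzero prime ideal 𝔭 of R such that the localization of I away from 𝔭 is a proper ideal of the localization of S away from 𝔭, i.e., I·S_(𝔭) ⊊ S_(𝔭), where S_(𝔭) = S ⊗_R R_(𝔭). (This is the key localization step in proving that a proper invertible integral ideal of S has nontrivial ideal norm [S : I]_R ⊊ R.) -/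
/-!
Choose a maximal ideal `M` of `S` containing `I` and let `𝔭 = M ∩ R`. Since `S` is integral over
`R`, the prime `𝔭` is maximal, hence nonzero because `R` is not a field. By construction `I ⊆ M`
does not meet the image of `R ∖ 𝔭`, so `I` stays proper after inverting that image.
-/


/-- Let `R` be a Dedekind domain that is not a field and `S` an `R`-algebra that is
finitely generated and torsion-free as an `R`-module. If `I` is a proper ideal of
`S`, then there is a nonzero prime `𝔭` of `R` such that `I·S_(𝔭) ⊊ S_(𝔭)`, where
`S_(𝔭)` is the localization of `S` at the image of `R ∖ 𝔭`. -/
theorem stmt_18 {R S : Type*} [CommRing R] [IsDedekindDomain R] (hR : ¬ IsField R)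
    [CommRing S] [Algebra R S] [Module.Finite R S] [NoZeroSMulDivisors R S]
    (I : Ideal S) (hI : I ≠ ⊤) :
    ∃ (P : Ideal R) (hP : P.IsPrime), P ≠ ⊥ ∧
      Ideal.map
        (algebraMap S (Localization
          (Submonoid.map (algebraMap R S) (@Ideal.primeCompl R _ P hP))))
        I ≠ ⊤ := by
  obtain ⟨M, hM, hIM⟩ := I.exists_le_maximal hI
  have hP : (M.comap (algebraMap R S)).IsMaximal :=
    Ideal.isMaximal_comap_of_isIntegral_of_isMaximal M
  refine ⟨M.comap (algebraMap R S), hP.isPrime, Ring.ne_bot_of_isMaximal_of_not_isField hP hR, ?_⟩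
  rw [IsLocalization.map_algebraMap_ne_top_iff_disjoint
    (Submonoid.map (algebraMap R S) (@Ideal.primeCompl R _ _ hP.isPrime))]
  refine Set.disjoint_left.mpr ?_
  rintro _ ⟨r, hr, rfl⟩ hrI
  exact hr (hIM hrI)
end
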